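/- arXiv:2506.16140 — 2 statements merged into one kernel-verified Lean document; each statement's English description precedes it below -/
import Mathlib

section
/- Let F be a graph containing a cycle and let k ≥ 2 and r > k be integers. For sufficiently large n, ex_r(n, Berge-(F ∪ M_{k-1})) = ex_r(n, Berge-F). -/
/-!
A Berge copy of `F` together with a disjoint matching contains a Berge copy of `F`, so
`exBerge r n F ≤ exBerge r n (F.sum (matchingG (k - 1)))`. The converse combines two facts.

* A hypergraph `H` on `n` vertices that contains a Berge copy of a graph with vertex set of size
  `c` also contains one with a further disjoint edge, unless `H` has only linearly many
  hyperedges. Otherwise every hyperedge not used by the copy has at most one vertex outside the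
  core of the copy, and there are at most `2 ^ c * (n + 1)` of those
  (`IsBergeCopy.sum_edge`). Iterating, a hypergraph with more than `a * n + b` hyperedges and a
  Berge copy of `F` has a Berge copy of `F` with the matching (`IsBergeCopy.sum_matching`).

* If `F` contains a cycle, `exBerge r n F` exceeds any `a * n + b` for large `n`
  (`exBerge_superlinear`). It suffices to avoid a cycle `F'` of `F`, of which only the absence of
  bridges matters. Take a largest `r`-uniform hypergraph of maximum degree at most `D` without a
  Berge copy of `F'`. If it had many vertices of degree less than `D`, then `r` of them would be
  pairwise far apart, as balls of bounded radius have bounded size. These `r` vertices could be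
  added as a hyperedge without creating a Berge copy of `F'`: the edge `xy` of `F'` represented
  by the new hyperedge is not a bridge, so `x` and `y` would be joined by a short walk of old
  hyperedges. Hence all but boundedly many vertices have degree `D`, which gives about
  `D * n / r` hyperedges.

So for large `n` an extremal hypergraph for `F.sum (matchingG (k - 1))` that contains a Berge copy
of `F` is no larger than an extremal hypergraph for `F`.
-/

open Finset

/-- A Berge copy of the graph `F` in the hypergraph `H`: an injective embedding of the
vertices of `F` together with an injective assignment of distinct hyperedges to the
edges of `F`, each hyperedge containing (the images of) both endpoints of its edge. -/
def IsBergeCopy {α V : Type*} (F : SimpleGraph α) (H : Finset (Finset V)) : Prop :=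
  ∃ (f : α → V) (φ : Sym2 α → Finset V),
    Function.Injective f ∧ Set.InjOn φ F.edgeSet ∧
    ∀ e ∈ F.edgeSet, φ e ∈ H ∧ ∀ x ∈ e, f x ∈ φ e

/-- The Turán number `ex_r(n, Berge-F)`: the maximum number of hyperedges in an
`n`-vertex `r`-uniform hypergraph with no Berge copy of `F`. -/
noncomputable def exBerge {α : Type*} (r n : ℕ) (F : SimpleGraph α) : ℕ :=
  sSup {m | ∃ H : Finset (Finset (Fin n)),
    (∀ e ∈ H, e.card = r) ∧ ¬ IsBergeCopy F H ∧ H.card = m}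

/-- The path with `ℓ` edges, on `ℓ+1` vertices. -/
def pathG (ℓ : ℕ) : SimpleGraph (Fin (ℓ + 1)) :=
  SimpleGraph.fromRel (fun x y => (x : ℕ) + 1 = (y : ℕ))

/-- `c` vertex-disjoint stars, each with `ℓ` edges (centers are the vertices `(i, 0)`). -/
def starsG (c ℓ : ℕ) : SimpleGraph (Fin c × Fin (ℓ + 1)) :=
  SimpleGraph.fromRel (fun x y => x.1 = y.1 ∧ x.2 = 0)

/-- A matching with `t` edges. -/
def matchingG (t : ℕ) : SimpleGraph (Fin t × Fin 2) :=
  SimpleGraph.fromRel (fun x y => x.1 = y.1)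

/-- Vertex-disjoint union of `k` paths, the `i`-th having `ℓ i` edges. -/
def pathsG (k : ℕ) (ℓ : Fin k → ℕ) : SimpleGraph (Σ i : Fin k, Fin (ℓ i + 1)) :=
  SimpleGraph.fromRel (fun x y => x.1 = y.1 ∧ (x.2 : ℕ) + 1 = (y.2 : ℕ))

/-- A hypergraph is connected if every two vertices are joined by a walk of hyperedges
(equivalently, lie on a common Berge path). -/
def HyperConnected {V : Type*} (H : Finset (Finset V)) : Prop :=
  ∀ u v : V, Relation.ReflTransGen (fun a b => ∃ e ∈ H, a ∈ e ∧ b ∈ e) u v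

/-- The connected Turán number `ex^con_r(n, Berge-F)`. -/
noncomputable def exConBerge {α : Type*} (r n : ℕ) (F : SimpleGraph α) : ℕ :=
  sSup {m | ∃ H : Finset (Finset (Fin n)),
    (∀ e ∈ H, e.card = r) ∧ HyperConnected H ∧ ¬ IsBergeCopy F H ∧ H.card = m}

/-! ### Elementary facts on Berge copies and the Turán number -/

lemma IsBergeCopy.of_hom {β γ V : Type*} {G : SimpleGraph β} {G' : SimpleGraph γ}
    {H : Finset (Finset V)} (h : IsBergeCopy G H) (i : G' →g G) (hi : Function.Injective i) :
    IsBergeCopy G' H := by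
  obtain ⟨f, φ, hf, hφ, hH⟩ := h
  have hmem : ∀ e ∈ G'.edgeSet, Sym2.map i e ∈ G.edgeSet := by
    intro e
    induction e with | _ x y =>
    intro he
    exact i.map_adj he
  refine ⟨f ∘ i, φ ∘ Sym2.map i, hf.comp hi, ?_, ?_⟩
  · intro e he e' he' hee
    exact Sym2.map.injective hi (hφ (hmem e he) (hmem e' he') hee)
  · intro e he
    refine ⟨(hH _ (hmem e he)).1, fun x hx => (hH _ (hmem e he)).2 _ ?_⟩
    exact Sym2.mem_map.2 ⟨x, hx, rfl⟩

lemma bddAbove_exBerge {α : Type*} (r n : ℕ) (F : SimpleGraph α) :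
    BddAbove {m | ∃ H : Finset (Finset (Fin n)),
      (∀ e ∈ H, e.card = r) ∧ ¬ IsBergeCopy F H ∧ H.card = m} := by
  refine ⟨Fintype.card (Finset (Fin n)), ?_⟩
  rintro m ⟨H, -, -, rfl⟩
  exact Finset.card_le_univ H

lemma card_le_exBerge {α : Type*} {r n : ℕ} {F : SimpleGraph α} {H : Finset (Finset (Fin n))}
    (hH : ∀ e ∈ H, e.card = r) (hF : ¬ IsBergeCopy F H) : H.card ≤ exBerge r n F :=
  le_csSup (bddAbove_exBerge r n F) ⟨H, hH, hF, rfl⟩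

lemma exBerge_le {α : Type*} {r n b : ℕ} {F : SimpleGraph α}
    (h : ∀ H : Finset (Finset (Fin n)), (∀ e ∈ H, e.card = r) → ¬ IsBergeCopy F H → H.card ≤ b) :
    exBerge r n F ≤ b := by
  refine csSup_le' ?_
  rintro m ⟨H, h1, h2, rfl⟩
  exact h H h1 h2

/-! ### Adding a matching to a Berge copy -/

/-- A hyperedge with at most one vertex outside `S` is determined by its trace on `S` and the
remaining set of at most one vertex. -/
lemma card_filter_card_sdiff_le_one {V : Type*} [Fintype V] [DecidableEq V]
    (H : Finset (Finset V)) (S : Finset V) :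
    (H.filter fun e => (e \ S).card ≤ 1).card ≤ 2 ^ S.card * (Fintype.card V + 1) := by
  have h1 : (H.filter fun e => (e \ S).card ≤ 1).card ≤
      (S.powerset ×ˢ insert ∅ (univ.image fun v : V => ({v} : Finset V))).card := by
    refine Finset.card_le_card_of_injOn (fun e => (e ∩ S, e \ S)) ?_ ?_
    · intro e he
      have he' := (Finset.mem_filter.1 he).2
      simp only [Finset.coe_product, Set.mem_prod, Finset.mem_coe, Finset.mem_powerset,
        Finset.mem_insert, Finset.mem_image, Finset.mem_univ, true_and]
      refine ⟨Finset.inter_subset_right, ?_⟩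
      rcases Nat.le_one_iff_eq_zero_or_eq_one.1 he' with h | h
      · exact Or.inl (Finset.card_eq_zero.1 h)
      · obtain ⟨v, hv⟩ := Finset.card_eq_one.1 h
        exact Or.inr ⟨v, hv.symm⟩
    · intro e _ e' _ h
      simp only [Prod.mk.injEq] at h
      rw [← Finset.sdiff_union_inter e S, ← Finset.sdiff_union_inter e' S, h.1, h.2]
  refine h1.trans ?_
  rw [Finset.card_product, Finset.card_powerset]
  refine Nat.mul_le_mul_left _ ((Finset.card_insert_le _ _).trans ?_)
  exact Nat.succ_le_succ Finset.card_image_le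

/-- If `H` has many hyperedges, a Berge copy of `G` extends to a Berge copy of `G` together with
one disjoint edge: some hyperedge that the copy does not use has two vertices outside its core. -/
lemma IsBergeCopy.sum_edge {β V : Type*} [Fintype β] [Fintype V]
    {G : SimpleGraph β} {H : Finset (Finset V)} (h : IsBergeCopy G H)
    (hcard : Fintype.card β * Fintype.card β + 2 ^ Fintype.card β * (Fintype.card V + 1) < H.card) :
    IsBergeCopy (G.sum (⊤ : SimpleGraph (Fin 2))) H := by
  classical
  obtain ⟨f, φ, hf, hφ, hH⟩ := h
  set S : Finset V := univ.image f
  have hS : S.card ≤ Fintype.card β := Finset.card_image_le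
  set A : Finset (Finset V) := univ.image fun p : β × β => φ s(p.1, p.2)
  have hA : A.card ≤ Fintype.card β * Fintype.card β := by
    refine Finset.card_image_le.trans ?_
    simp
  have hB := card_filter_card_sdiff_le_one H S
  have hB' : 2 ^ S.card * (Fintype.card V + 1) ≤ 2 ^ Fintype.card β * (Fintype.card V + 1) :=
    Nat.mul_le_mul_right _ (Nat.pow_le_pow_right two_pos hS)
  obtain ⟨E, hE, hEn⟩ : ∃ E ∈ H, E ∉ A ∪ H.filter fun e => (e \ S).card ≤ 1 := by
    by_contra! hc
    have := (Finset.card_le_card (show H ⊆ _ from hc)).trans (Finset.card_union_le _ _)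
    omega
  simp only [Finset.mem_union, Finset.mem_filter, not_or, not_and, not_le] at hEn
  obtain ⟨a, ha, b, hb, hab⟩ := Finset.one_lt_card.1 (hEn.2 hE)
  rw [Finset.mem_sdiff] at ha hb
  have hfS : ∀ x, f x ∈ S := fun x => Finset.mem_image_of_mem f (Finset.mem_univ x)
  have hEA : ∀ e, φ e ≠ E := by
    intro e
    induction e with | _ x y =>
    intro he
    exact hEn.1 (Finset.mem_image.2 ⟨(x, y), Finset.mem_univ _, he⟩)
  have hinl : Function.Injective (Sym2.map (Sum.inl : β → β ⊕ Fin 2)) :=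
    Sym2.map.injective Sum.inl_injective
  have hedge : ∀ e ∈ (G.sum (⊤ : SimpleGraph (Fin 2))).edgeSet,
      (∃ e₀ ∈ G.edgeSet, Sym2.map Sum.inl e₀ = e) ∨ e = s(Sum.inr 0, Sum.inr 1) := by
    intro e
    induction e with | _ x y =>
    intro he
    rw [SimpleGraph.mem_edgeSet] at he
    rcases x with x | x <;> rcases y with y | y
    · exact Or.inl ⟨s(x, y), by simpa using he, rfl⟩
    · simp at he
    · simp at he
    · right
      fin_cases x <;> fin_cases y <;> simp_all
  let ψ : Sym2 (β ⊕ Fin 2) → Finset V := fun e =>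
    if h : ∃ e₀, Sym2.map Sum.inl e₀ = e then φ h.choose else E
  have hψl : ∀ e₀, ψ (Sym2.map Sum.inl e₀) = φ e₀ := by
    intro e₀
    have h : ∃ e₁ : Sym2 β, Sym2.map (Sum.inl : β → β ⊕ Fin 2) e₁ = Sym2.map Sum.inl e₀ := ⟨e₀, rfl⟩
    simp only [ψ, dif_pos h]
    rw [hinl h.choose_spec]
  have hψr : ψ s(Sum.inr 0, Sum.inr 1) = E := by
    have h : ¬ ∃ e₁ : Sym2 β, Sym2.map (Sum.inl : β → β ⊕ Fin 2) e₁ = s(Sum.inr 0, Sum.inr 1) := by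
      rintro ⟨e₁, he⟩
      have : (Sum.inr 0 : β ⊕ Fin 2) ∈ Sym2.map (Sum.inl : β → β ⊕ Fin 2) e₁ := by simp [he]
      simp at this
    simp only [ψ, dif_neg h]
  refine ⟨Sum.elim f ![a, b], ψ, ?_, ?_, ?_⟩
  · refine hf.sumElim ?_ ?_
    · intro i j hij
      fin_cases i <;> fin_cases j <;> simp_all
    · intro x i hxi
      have := hfS x
      fin_cases i <;> simp_all
  · intro e he e' he' hee
    rcases hedge e he with ⟨e₀, h₀, rfl⟩ | rfl <;> rcases hedge e' he' with ⟨e₁, h₁, rfl⟩ | rfl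
    · rw [hψl, hψl] at hee
      rw [hφ h₀ h₁ hee]
    · rw [hψl, hψr] at hee
      exact absurd hee (hEA _)
    · rw [hψl, hψr] at hee
      exact absurd hee.symm (hEA _)
    · rfl
  · intro e he
    rcases hedge e he with ⟨e₀, h₀, rfl⟩ | rfl
    · rw [hψl]
      refine ⟨(hH _ h₀).1, fun x hx => ?_⟩
      obtain ⟨y, hy, rfl⟩ := Sym2.mem_map.1 hx
      exact (hH _ h₀).2 y hy
    · rw [hψr]
      refine ⟨hE, fun x hx => ?_⟩
      rcases Sym2.mem_iff.1 hx with rfl | rfl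
      · exact ha.1
      · exact hb.1

/-- A Berge copy of `F` in a hypergraph with many hyperedges (linearly many in the number of
vertices suffices) extends to a Berge copy of `F` with a disjoint matching. -/
lemma IsBergeCopy.sum_matching {α V : Type*} [Fintype α] [Fintype V]
    {F : SimpleGraph α} {H : Finset (Finset V)} (h : IsBergeCopy F H) (T c : ℕ)
    (hc : Fintype.card α + T * 2 ≤ c) (hcard : c * c + 2 ^ c * (Fintype.card V + 1) < H.card) :
    ∀ t ≤ T, IsBergeCopy (F.sum (matchingG t)) H := by
  intro t
  induction t with
  | zero =>
    intro _
    refine h.of_hom ⟨Sum.elim id fun p => p.1.elim0, ?_⟩ ?_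
    · rintro (x | ⟨x, -⟩) (y | ⟨y, -⟩) hxy
      · simpa using hxy
      · exact y.elim0
      · exact x.elim0
      · exact x.elim0
    · rintro (x | ⟨x, -⟩) (y | ⟨y, -⟩) hxy
      · simpa using hxy
      · exact y.elim0
      · exact x.elim0
      · exact x.elim0
  | succ t ih =>
    intro ht
    have hβ : Fintype.card (α ⊕ (Fin t × Fin 2)) ≤ c := by
      simp only [Fintype.card_sum, Fintype.card_prod, Fintype.card_fin]
      omega
    have h2 := (ih (by omega)).sum_edge (lt_of_le_of_lt (Nat.add_le_add (Nat.mul_le_mul hβ hβ)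
      (Nat.mul_le_mul_right _ (Nat.pow_le_pow_right two_pos hβ))) hcard)
    -- the last matching edge goes to the additional edge, the others keep their index
    let g : α ⊕ (Fin (t + 1) × Fin 2) → (α ⊕ (Fin t × Fin 2)) ⊕ Fin 2 :=
      Sum.elim (fun x => Sum.inl (Sum.inl x)) fun p =>
        if hp : (p.1 : ℕ) < t then Sum.inl (Sum.inr (⟨p.1, hp⟩, p.2)) else Sum.inr p.2
    refine h2.of_hom ⟨g, ?_⟩ ?_
    · rintro (x | ⟨x, i⟩) (y | ⟨y, j⟩) hxy
      · simpa [g] using hxy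
      · simp at hxy
      · simp at hxy
      · have hxy' : x = y ∧ i ≠ j := by
          simp only [SimpleGraph.sum_adj_inr, matchingG, SimpleGraph.fromRel_adj, ne_eq,
            Prod.mk.injEq, not_and] at hxy
          rcases hxy with ⟨h1, h2 | h2⟩
          · exact ⟨h2, h1 h2⟩
          · exact ⟨h2.symm, h1 h2.symm⟩
        obtain ⟨rfl, hij⟩ := hxy'
        by_cases hp : (x : ℕ) < t
        · simp [g, hp, matchingG, hij]
        · simp [g, hp, hij]
    · rintro (x | ⟨x, i⟩) (y | ⟨y, j⟩) hxy
      · simpa [g] using hxy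
      · by_cases hp : (y : ℕ) < t <;> simp [g, hp] at hxy
      · by_cases hp : (x : ℕ) < t <;> simp [g, hp] at hxy
      · by_cases hp : (x : ℕ) < t <;> by_cases hq : (y : ℕ) < t <;> simp [g, hp, hq] at hxy
        · simp [Fin.ext_iff, hxy.1, hxy.2]
        · have : x = y := Fin.ext (by omega)
          simp [this, hxy]

/-! ### Bridgeless subgraphs -/

/-- A graph that contains a cycle has a subgraph with an edge and without bridges, namely the
cycle itself. -/
lemma exists_bridgeless_le {α : Type*} (F : SimpleGraph α) (hF : ¬ F.IsAcyclic) :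
    ∃ F' ≤ F, (∃ x y, F'.Adj x y) ∧
      ∀ x y, F'.Adj x y → (F'.deleteEdges {s(x, y)}).Reachable x y := by
  simp only [SimpleGraph.IsAcyclic, not_forall, not_not] at hF
  obtain ⟨v, c, hc⟩ := hF
  have hadj : ∀ x y, (SimpleGraph.fromEdgeSet {e | e ∈ c.edges}).Adj x y ↔ s(x, y) ∈ c.edges := by
    intro x y
    simp only [SimpleGraph.fromEdgeSet_adj, Set.mem_ofPred_eq, ne_eq, and_iff_left_iff_imp]
    intro h
    exact (c.adj_of_mem_edges h).ne
  have hsub : ∀ e ∈ c.edges, e ∈ (SimpleGraph.fromEdgeSet {e | e ∈ c.edges}).edgeSet := by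
    intro e
    induction e with | _ x y => exact (hadj x y).2
  refine ⟨SimpleGraph.fromEdgeSet {e | e ∈ c.edges}, ?_, ?_, ?_⟩
  · intro x y h
    exact c.adj_of_mem_edges ((hadj x y).1 h)
  · cases c with
    | nil => exact absurd hc SimpleGraph.Walk.not_isCycle_nil
    | cons h p => exact ⟨_, _, (hadj _ _).2 (List.mem_cons_self ..)⟩
  · intro x y h
    refine (SimpleGraph.adj_and_reachable_delete_edges_iff_exists_cycle.2
      ⟨v, c.transfer _ hsub, hc.transfer hsub, ?_⟩).2
    simpa using (hadj x y).1 h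

/-! ### Balls in a hypergraph of bounded degree -/

/-- The set consisting of `v` and all vertices that share a hyperedge of `H` with `v`. -/
def nbhd {V : Type*} [DecidableEq V] (H : Finset (Finset V)) (v : V) : Finset V :=
  insert v ((H.filter fun e => v ∈ e).biUnion id)

/-- The ball of radius `m` around `v`: the vertices reached from `v` by a walk of at most `m`
hyperedges of `H`. -/
def hyperBall {V : Type*} [DecidableEq V] (H : Finset (Finset V)) : ℕ → V → Finset V
  | 0, v => {v}
  | m + 1, v => (nbhd H v).biUnion (hyperBall H m)

lemma mem_hyperBall_self {V : Type*} [DecidableEq V] (H : Finset (Finset V)) (m : ℕ) (v : V) :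
    v ∈ hyperBall H m v := by
  induction m with
  | zero => simp [hyperBall]
  | succ m ih =>
    exact Finset.mem_biUnion.2 ⟨v, Finset.mem_insert_self _ _, ih⟩

lemma mem_nbhd {V : Type*} [DecidableEq V] {H : Finset (Finset V)} {e : Finset V} {u v : V}
    (he : e ∈ H) (hu : u ∈ e) (hv : v ∈ e) : v ∈ nbhd H u :=
  Finset.mem_insert_of_mem
    (Finset.mem_biUnion.2 ⟨e, Finset.mem_filter.2 ⟨he, hu⟩, hv⟩)

lemma card_hyperBall_le {V : Type*} [DecidableEq V] {H : Finset (Finset V)} {r D : ℕ}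
    (hr : ∀ e ∈ H, e.card = r) (hD : ∀ v, (H.filter fun e => v ∈ e).card ≤ D) (m : ℕ) (v : V) :
    (hyperBall H m v).card ≤ (D * r + 1) ^ m := by
  induction m generalizing v with
  | zero => simp [hyperBall]
  | succ m ih =>
    have h1 : (nbhd H v).card ≤ D * r + 1 := by
      refine (Finset.card_insert_le _ _).trans (Nat.succ_le_succ ?_)
      refine (Finset.card_biUnion_le_card_mul _ _ r fun e he => ?_).trans
        (Nat.mul_le_mul_right _ (hD v))
      exact (hr e (Finset.mem_filter.1 he).1).le
    calc (hyperBall H (m + 1) v).card ≤ (nbhd H v).card * (D * r + 1) ^ m :=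
          Finset.card_biUnion_le_card_mul _ _ _ fun w _ => ih w
      _ ≤ (D * r + 1) * (D * r + 1) ^ m := Nat.mul_le_mul_right _ h1
      _ = (D * r + 1) ^ (m + 1) := by ring

lemma mem_hyperBall_of_walk {β V : Type*} [DecidableEq V] {H : Finset (Finset V)}
    {G : SimpleGraph β} {f : β → V} (hf : ∀ x y, G.Adj x y → ∃ e ∈ H, f x ∈ e ∧ f y ∈ e)
    {x y : β} (w : G.Walk x y) (m : ℕ) (hm : w.length ≤ m) : f y ∈ hyperBall H m (f x) := by
  induction w generalizing m with
  | nil => exact mem_hyperBall_self H m _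
  | cons h p ih =>
    obtain ⟨e, he, h1, h2⟩ := hf _ _ h
    cases m with
    | zero => simp at hm
    | succ m =>
      exact Finset.mem_biUnion.2 ⟨_, mem_nbhd he h1 h2, ih m (by simpa using hm)⟩

/-- A set with more than `j * B` vertices contains `j` vertices that are pairwise far apart,
if all balls have at most `B` vertices. -/
lemma exists_far_subset {V : Type*} [DecidableEq V] (H : Finset (Finset V)) (m B : ℕ)
    (hB : ∀ v, (hyperBall H m v).card ≤ B) (L : Finset V) (j : ℕ) (hL : j * B < L.card) :
    ∃ T ⊆ L, T.card = j ∧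
      ∀ x ∈ T, ∀ y ∈ T, x ≠ y → y ∉ hyperBall H m x ∨ x ∉ hyperBall H m y := by
  induction j with
  | zero => exact ⟨∅, by simp, by simp, by simp⟩
  | succ j ih =>
    rw [Nat.succ_mul] at hL
    obtain ⟨T, hTL, hTc, hT⟩ := ih (by omega)
    obtain ⟨v, hvL, hv⟩ : ∃ v ∈ L, v ∉ T.biUnion (hyperBall H m) := by
      by_contra! hc
      have h1 := Finset.card_le_card (show L ⊆ _ from hc)
      have h2 := Finset.card_biUnion_le_card_mul T (hyperBall H m) B fun w _ => hB w
      rw [hTc] at h2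
      omega
    have hv' : ∀ x ∈ T, v ∉ hyperBall H m x := fun x hx h =>
      hv (Finset.mem_biUnion.2 ⟨x, hx, h⟩)
    have hvT : v ∉ T := fun h => hv' v h (mem_hyperBall_self H m v)
    refine ⟨insert v T, Finset.insert_subset hvL hTL, by
      rw [Finset.card_insert_of_notMem hvT, hTc], ?_⟩
    intro x hx y hy hxy
    rcases Finset.mem_insert.1 hx with hxv | hxT <;> rcases Finset.mem_insert.1 hy with hyv | hyT
    · exact absurd (hxv.trans hyv.symm) hxy
    · exact Or.inr (hxv ▸ hv' y hyT)
    · exact Or.inl (hyv ▸ hv' x hxT)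
    · exact hT x hxT y hyT hxy

/-! ### Dense hypergraphs without a Berge copy of a graph containing a cycle -/

/-- Adding a hyperedge whose vertices are pairwise far apart does not create a Berge copy of a
bridgeless graph: the two ends of the edge represented by the new hyperedge would be joined by a
short walk of old hyperedges. -/
lemma not_isBergeCopy_insert {β V : Type*} [Fintype β] [DecidableEq V]
    {G : SimpleGraph β} (hG : ∀ x y, G.Adj x y → (G.deleteEdges {s(x, y)}).Reachable x y)
    {H : Finset (Finset V)} (hH : ¬ IsBergeCopy G H) {E : Finset V} {m : ℕ}
    (hm : Fintype.card β ≤ m)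
    (hE : ∀ x ∈ E, ∀ y ∈ E, x ≠ y → y ∉ hyperBall H m x ∨ x ∉ hyperBall H m y) :
    ¬ IsBergeCopy G (insert E H) := by
  rintro ⟨f, φ, hf, hφ, hφH⟩
  by_cases hused : ∃ e ∈ G.edgeSet, φ e = E
  · obtain ⟨e, he, heE⟩ := hused
    induction e with | _ x y =>
    have hxy : G.Adj x y := he
    have hold : ∀ a b, (G.deleteEdges {s(x, y)}).Adj a b → ∃ e ∈ H, f a ∈ e ∧ f b ∈ e := by
      intro a b hab
      rw [SimpleGraph.deleteEdges_adj] at hab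
      have hmem : s(a, b) ∈ G.edgeSet := hab.1
      refine ⟨φ s(a, b), ?_, (hφH _ hmem).2 a (by simp), (hφH _ hmem).2 b (by simp)⟩
      refine Finset.mem_of_mem_insert_of_ne (hφH _ hmem).1 fun h => hab.2 ?_
      exact hφ hmem he (h.trans heE.symm)
    obtain ⟨p, hp⟩ := (hG x y hxy).exists_isPath
    have hlen : p.length ≤ m := hp.length_lt.le.trans hm
    have hx : f x ∈ E := heE ▸ (hφH _ he).2 x (by simp)
    have hy : f y ∈ E := heE ▸ (hφH _ he).2 y (by simp)
    rcases hE _ hx _ hy (hf.ne hxy.ne) with h | h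
    · exact h (mem_hyperBall_of_walk hold p m hlen)
    · exact h (mem_hyperBall_of_walk hold p.reverse m (by simpa using hlen))
  · push Not at hused
    exact hH ⟨f, φ, hf, hφ, fun e he =>
      ⟨Finset.mem_of_mem_insert_of_ne (hφH e he).1 (hused e he), (hφH e he).2⟩⟩

/-- A maximal `r`-uniform hypergraph of maximum degree at most `D` without a Berge copy of a
bridgeless graph has only boundedly many vertices of degree less than `D`. -/
lemma exists_dense_of_bridgeless {β V : Type*} [Fintype β] [Fintype V] [DecidableEq V]
    (G : SimpleGraph β) (hne : ∃ x y, G.Adj x y)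
    (hG : ∀ x y, G.Adj x y → (G.deleteEdges {s(x, y)}).Reachable x y) (r D : ℕ) (hr : 2 ≤ r) :
    ∃ H : Finset (Finset V), (∀ e ∈ H, e.card = r) ∧ ¬ IsBergeCopy G H ∧
      D * Fintype.card V ≤
        r * H.card + D * (r * (D * r + 1) ^ (Fintype.card β + 1)) := by
  classical
  let P : Finset (Finset V) → Prop := fun H =>
    (∀ e ∈ H, e.card = r) ∧ (∀ v, (H.filter fun e => v ∈ e).card ≤ D) ∧ ¬ IsBergeCopy G H
  have hP0 : P ∅ := by
    refine ⟨by simp, by simp, ?_⟩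
    rintro ⟨f, φ, -, -, h⟩
    obtain ⟨x, y, hxy⟩ := hne
    simpa using (h s(x, y) hxy).1
  obtain ⟨H, hH, hmax⟩ := Finset.exists_max_image (univ.filter P) Finset.card
    ⟨∅, Finset.mem_filter.2 ⟨Finset.mem_univ _, hP0⟩⟩
  obtain ⟨hunif, hdeg, hfree⟩ := (Finset.mem_filter.1 hH).2
  refine ⟨H, hunif, hfree, ?_⟩
  set m := Fintype.card β + 1
  set B := (D * r + 1) ^ m
  set L : Finset V := univ.filter fun v => (H.filter fun e => v ∈ e).card < D
  have hLcard : L.card ≤ r * B := by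
    by_contra! hL
    obtain ⟨E, hEL, hEc, hE⟩ :=
      exists_far_subset H m B (card_hyperBall_le hunif hdeg m) L r hL
    have hEH : E ∉ H := by
      intro h
      obtain ⟨x, hx, y, hy, hxy⟩ := Finset.one_lt_card.1 (show 1 < E.card by omega)
      have hball : ∀ a ∈ E, ∀ b ∈ E, b ∈ hyperBall H m a := fun a ha b hb =>
        Finset.mem_biUnion.2 ⟨b, mem_nbhd h ha hb, mem_hyperBall_self H _ b⟩
      rcases hE x hx y hy hxy with h' | h'
      · exact h' (hball x hx y hy)
      · exact h' (hball y hy x hx)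
    have hPE : P (insert E H) := by
      refine ⟨?_, ?_, not_isBergeCopy_insert hG hfree (Nat.le_succ _) hE⟩
      · intro e he
        rcases Finset.mem_insert.1 he with rfl | he
        · exact hEc
        · exact hunif e he
      · intro v
        rw [Finset.filter_insert]
        split_ifs with hv
        · have := (Finset.mem_filter.1 (hEL hv)).2
          exact (Finset.card_insert_le _ _).trans this
        · exact hdeg v
    have := hmax _ (Finset.mem_filter.2 ⟨Finset.mem_univ _, hPE⟩)
    rw [Finset.card_insert_of_notMem hEH] at this
    omega
  -- double counting of the incidences with vertices of full degree
  have hcount : (univ \ L).card * D ≤ ∑ e ∈ H, ((univ \ L) ∩ e).card := by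
    refine Finset.le_sum_card_inter fun v hv => ?_
    simpa [L] using hv
  have hsum : ∑ e ∈ H, ((univ \ L) ∩ e).card ≤ H.card * r := by
    refine Finset.sum_le_card_nsmul _ _ _ fun e he => ?_
    exact (Finset.card_le_card Finset.inter_subset_right).trans (hunif e he).le
  have hV : Fintype.card V ≤ (univ \ L).card + r * B := by
    have := Finset.card_sdiff_add_card_eq_card (Finset.subset_univ L)
    rw [Finset.card_univ] at this
    omega
  calc D * Fintype.card V ≤ D * ((univ \ L).card + r * B) := Nat.mul_le_mul_left _ hV
    _ = (univ \ L).card * D + D * (r * B) := by ring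
    _ ≤ r * H.card + D * (r * B) := by
      rw [mul_comm r H.card]
      exact Nat.add_le_add_right (hcount.trans hsum) _

/-- If `F` contains a cycle, then `ex_r(n, Berge-F)` is superlinear in `n`. -/
lemma exBerge_superlinear {α : Type*} [Fintype α] (F : SimpleGraph α) (hF : ¬ F.IsAcyclic)
    (r : ℕ) (hr : 2 ≤ r) (a b : ℕ) : ∃ N, ∀ n ≥ N, a * n + b ≤ exBerge r n F := by
  obtain ⟨F', hle, hne, hbr⟩ := exists_bridgeless_le F hF
  set D := r * (a + 1)
  set K := (a + 1) * (r * (D * r + 1) ^ (Fintype.card α + 1))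
  refine ⟨K + b, fun n hn => ?_⟩
  obtain ⟨H, hunif, hfree, hcard⟩ := exists_dense_of_bridgeless (V := Fin n) F' hne hbr r D hr
  have h1 : H.card ≤ exBerge r n F := card_le_exBerge hunif fun h =>
    hfree (h.of_hom (SimpleGraph.Hom.ofLE hle) Function.injective_id)
  have h2 : r * ((a + 1) * n) ≤ r * (H.card + K) := by
    rw [Fintype.card_fin] at hcard
    calc r * ((a + 1) * n) = D * n := by simp only [D]; ring
      _ ≤ _ := hcard
      _ = r * (H.card + K) := by simp only [K, D]; ring
  have h3 := Nat.le_of_mul_le_mul_left h2 (by omega)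
  rw [Nat.succ_mul] at h3
  omega

theorem ex_berge_union_matching_eq_of_cycle {α : Type*} [Fintype α]
    (F : SimpleGraph α) (k r : ℕ) (hk : 2 ≤ k) (hr : k < r)
    (hcycle : ¬ F.IsAcyclic) :
    ∃ N, ∀ n ≥ N,
      exBerge r n (F.sum (matchingG (k - 1))) = exBerge r n F := by
  obtain ⟨c, hc⟩ : ∃ c, c = Fintype.card α + (k - 1) * 2 := ⟨_, rfl⟩
  obtain ⟨N, hN⟩ := exBerge_superlinear F hcycle r (by omega) (2 ^ c) (c * c + 2 ^ c)
  refine ⟨N, fun n hn => le_antisymm ?_ ?_⟩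
  · refine exBerge_le fun H hunif hfree => ?_
    by_cases hF : IsBergeCopy F H
    · refine le_trans ?_ (hN n hn)
      by_contra! hbig
      refine hfree (hF.sum_matching (k - 1) c hc.ge ?_ (k - 1) le_rfl)
      rw [Fintype.card_fin, Nat.mul_succ]
      omega
    · exact card_le_exBerge hunif hF
  · refine exBerge_le fun H hunif hfree => card_le_exBerge hunif fun h => hfree ?_
    exact h.of_hom (SimpleGraph.Embedding.sumInl (H := matchingG (k - 1))).toHom
      Sum.inl_injective
end

section
/- Let k ≥ 2 be an integer, let ℓ₁ ≥ ℓ₂ ≥ … ≥ ℓ_k ≥ 1 be odd integers, set L = Σ_{i=1}^k (ℓ_i + 1), and let 3 ≤ r ≤ L/2 - 7. For sufficiently large n, the maximum number of hyperedges in an n-vertex connected r-uniform hypergraph containing no Berge copy of P_{ℓ₁} ∪ ⋯ ∪ P_{ℓ_k} equals C(L/2 - 1, r-1)·(n - L/2 + 1) + C(L/2 - 1, r). -/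
/-!
Put `L = ∑ (ℓ i + 1) = 2t + 2`.  The forest is a spanning subgraph of the path on `L` vertices, so a
hypergraph without a Berge copy of it has no Berge path on `2t + 2` vertices (`HasBP.isBergeCopy`).
For the lower bound take all `r`-sets with at most one vertex outside a fixed `t`-set (`coneH`): as
all `ℓ i` are odd, the forest has a perfect matching, hence no vertex cover of size `t`.

For the upper bound let `H` be a connected hypergraph without a Berge path on `2t + 2` vertices and
with more than `C(t, r-1) (n - t) + C(t, r)` hyperedges.

* Hall's theorem (`hall_split`) gives a set `E` of pairs with distinct representing hyperedges, and
  an injective encoding of the hyperedges by pairs of `E` and by `r`-sets all of whose pairs are in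
  `E`.  Thus paths of the graph `E` lift to Berge paths of `H`, while `E` still sees all of `H`.
* A set `W` maximizing (twice the number of codes inside `W`) minus `(2 C(t, r-1) - 1) |W|` is large
  because `n` is, and every subset of `W` meets many codes (`exists_dense`).  In particular each
  vertex of `W` is in at least `C(t, r-1)` codes, which forces at least `t` neighbours in the graph
  `G` that `E` induces on `W`.
* `G` is connected (`reachable_of_no_path`): two components would each contribute a path on `t + 1`
  vertices, and these can be joined through `H` along a shortest connection.
* `G` has no path with `2t + 1` edges, so by Dirac's counting on a longest path (`cycle_or_clique`)
  either it has a cycle of length `2t`, or `t` of its vertices have all their neighbours in a common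
  `(t+1)`-set `Z`.  In the second case `Z` would hold more codes than there are sets available
  (`clique_count_lt`).  In the first case all edges at vertices off the cycle go to the cycle, and
  by pigeonhole there is a complete bipartite core with sides `t` and at least `t + 4`
  (`core_of_cycle`).
* Such a core determines `H`: a hyperedge with two vertices outside the side `A` of size `t` is the
  only hyperedge through each of them, so each vertex outside `A` accounts for at most `C(t, r-1)`
  hyperedges (`card_le_of_core`).  This is the desired bound.
-/

open Finset

/-! ### Berge paths -/

/-- `Links l es`: consecutive vertices of the list `l` lie together in the corresponding member of
the list `es`.  With both lists duplicate-free this is a Berge path with vertex sequence `l`. -/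
inductive Links {V : Type*} : List V → List (Finset V) → Prop
  | single (v : V) : Links [v] []
  | cons {u v : V} {l : List V} {e : Finset V} {es : List (Finset V)} (hu : u ∈ e) (hv : v ∈ e)
      (h : Links (v :: l) es) : Links (u :: v :: l) (e :: es)

/-- `H` contains a Berge path with at least `m` vertices. -/
def HasBP {V : Type*} (H : Finset (Finset V)) (m : ℕ) : Prop :=
  ∃ l es, Links l es ∧ l.Nodup ∧ es.Nodup ∧ (∀ e ∈ es, e ∈ H) ∧ m ≤ l.length

lemma Links.ne_nil {V : Type*} {l : List V} {es : List (Finset V)} (h : Links l es) : l ≠ [] := by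
  cases h <;> simp

lemma Links.length_eq {V : Type*} {l : List V} {es : List (Finset V)} (h : Links l es) :
    l.length = es.length + 1 := by
  induction h with
  | single v => simp
  | cons hu hv h ih => simpa using ih

lemma Links.get {V : Type*} {l : List V} {es : List (Finset V)} (h : Links l es) :
    ∀ (i : ℕ) (h1 : i + 1 < l.length) (h2 : i < es.length),
      l[i] ∈ es[i] ∧ l[i + 1] ∈ es[i] := by
  induction h with
  | single v => intro i h1; simp at h1
  | cons hu hv h ih =>
    intro i h1 h2
    cases i with
    | zero => exact ⟨by simpa using hu, by simpa using hv⟩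
    | succ i =>
      simp only [List.length_cons] at h1 h2 ih
      exact ih i (by omega) (by omega)

/-- Two Berge walks can be joined through an edge containing the end of the first and the start of
the second. -/
lemma Links.append {V : Type*} {l₁ : List V} {es₁ : List (Finset V)} (h₁ : Links l₁ es₁) :
    ∀ {v : V} {l₂ : List V} {es₂ : List (Finset V)} {e : Finset V}, Links (v :: l₂) es₂ →
      (∀ u ∈ l₁.getLast?, u ∈ e) → v ∈ e → Links (l₁ ++ v :: l₂) (es₁ ++ e :: es₂) := by
  induction h₁ with
  | single u => intro v l₂ es₂ e h₂ hu hv; exact .cons (hu u (by simp)) hv h₂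
  | cons hu hv h ih =>
    intro v l₂ es₂ e h₂ hu' hv'
    exact .cons hu hv (ih h₂ (by simpa using hu') hv')

lemma Links.reverse {V : Type*} {l : List V} {es : List (Finset V)} (h : Links l es) :
    Links l.reverse es.reverse := by
  induction h with
  | single v => exact .single v
  | cons hu hv h ih =>
    have := ih.append (.single _) (by simpa using hv) hu
    simpa only [List.reverse_cons] using this

/-- The disjoint union of paths on `∑ (ℓ i + 1)` vertices in total is a spanning subgraph of the
path on that many vertices, so a long Berge path contains a Berge copy of it. -/
lemma HasBP.isBergeCopy {V : Type*} {H : Finset (Finset V)} {k : ℕ} {ℓ : Fin k → ℕ}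
    (h : HasBP H (∑ i, (ℓ i + 1))) : IsBergeCopy (pathsG k ℓ) H := by
  obtain ⟨l, es, hl, hnd, hend, hH, hlen⟩ := h
  have hle := hl.length_eq
  let σ : (Σ i : Fin k, Fin (ℓ i + 1)) ≃ Fin (∑ i, (ℓ i + 1)) := finSigmaFinEquiv
  have hσ : ∀ x y, (pathsG k ℓ).Adj x y →
      (σ x : ℕ) + 1 = σ y ∨ (σ y : ℕ) + 1 = σ x := by
    rintro ⟨i, x⟩ ⟨j, y⟩ hxy
    simp only [pathsG, SimpleGraph.fromRel_adj] at hxy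
    obtain ⟨-, ⟨h1, h2⟩ | ⟨h1, h2⟩⟩ := hxy
    · left
      obtain rfl : i = j := h1
      simp only [σ, finSigmaFinEquiv_apply]
      omega
    · right
      obtain rfl : j = i := h1
      simp only [σ, finSigmaFinEquiv_apply]
      omega
  have hb : ∀ x, (σ x : ℕ) < l.length := fun x => lt_of_lt_of_le (σ x).2 hlen
  let φ : Sym2 (Σ i : Fin k, Fin (ℓ i + 1)) → Finset V :=
    Sym2.lift ⟨fun x y => (es[min (σ x : ℕ) (σ y)]?).getD ∅, fun x y => by
      simp only [min_comm]⟩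
  have hφ : ∀ x y, φ s(x, y) = (es[min (σ x : ℕ) (σ y)]?).getD ∅ := fun x y => rfl
  -- every edge can be written with its endpoints in increasing order
  have key : ∀ e ∈ (pathsG k ℓ).edgeSet, ∃ x y, e = s(x, y) ∧ (σ x : ℕ) + 1 = σ y ∧
      ∃ hx : (σ x : ℕ) < es.length, φ e = es[(σ x : ℕ)] := by
    intro e
    induction e with
    | _ x y =>
      intro he
      rw [SimpleGraph.mem_edgeSet] at he
      rcases hσ x y he with h | h
      · have := hb y
        have hx : (σ x : ℕ) < es.length := by omega
        refine ⟨x, y, rfl, h, hx, ?_⟩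
        rw [hφ, min_eq_left (by omega), List.getElem?_eq_getElem hx]; rfl
      · have := hb x
        have hx : (σ y : ℕ) < es.length := by omega
        refine ⟨y, x, Sym2.eq_swap, h, hx, ?_⟩
        rw [hφ, min_eq_right (by omega), List.getElem?_eq_getElem hx]; rfl
  refine ⟨fun x => l[(σ x : ℕ)]'(hb x), φ, ?_, ?_, ?_⟩
  · intro x y hxy
    have := (hnd.getElem_inj_iff).1 hxy
    exact σ.injective (Fin.ext this)
  · intro e he e' he' hee
    obtain ⟨x, y, rfl, h1, hx, h2⟩ := key e he
    obtain ⟨x', y', rfl, h1', hx', h2'⟩ := key e' he'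
    rw [h2, h2'] at hee
    have h3 := (hend.getElem_inj_iff).1 hee
    have e1 : x = x' := σ.injective (Fin.ext h3)
    have e2 : y = y' := σ.injective (Fin.ext (by omega))
    rw [e1, e2]
  · intro e he
    obtain ⟨x, y, rfl, h1, hx, h2⟩ := key e he
    rw [h2]
    refine ⟨hH _ (List.getElem_mem _), ?_⟩
    have hg := hl.get (σ x) (by have := hb y; omega) hx
    intro z hz
    rcases Sym2.mem_iff.1 hz with rfl | rfl
    · exact hg.1
    · have := hg.2
      simp only [h1] at this
      exact this

/-! ### The extremal construction -/

/-- All `r`-sets with at most one vertex outside `A`. -/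
def coneH {V : Type*} [Fintype V] [DecidableEq V] (A : Finset V) (r : ℕ) : Finset (Finset V) :=
  (univ.powersetCard r).filter (fun e => (e \ A).card ≤ 1)

/-- In a Berge copy inside `coneH A r` the vertices mapped into `A` cover all edges, while the
forest has a matching of half its order. -/
lemma coneH_free {V : Type*} [Fintype V] [DecidableEq V] (A : Finset V) (r : ℕ) {k : ℕ}
    {ℓ : Fin k → ℕ} (hodd : ∀ i, Odd (ℓ i)) (hA : 2 * A.card < ∑ i, (ℓ i + 1)) :
    ¬ IsBergeCopy (pathsG k ℓ) (coneH A r) := by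
  rintro ⟨f, φ, hf, -, hφ⟩
  choose m hm using hodd
  -- the matching edges are `(i, 2j) (i, 2j+1)` for `j ≤ m i`
  let p : (Σ i : Fin k, Fin (m i + 1)) → (Σ i : Fin k, Fin (ℓ i + 1)) :=
    fun x => ⟨x.1, ⟨2 * x.2, by have := x.2.2; have := hm x.1; omega⟩⟩
  let q : (Σ i : Fin k, Fin (m i + 1)) → (Σ i : Fin k, Fin (ℓ i + 1)) :=
    fun x => ⟨x.1, ⟨2 * x.2 + 1, by have := x.2.2; have := hm x.1; omega⟩⟩
  have hpq : ∀ x, (pathsG k ℓ).Adj (p x) (q x) := by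
    intro x
    simp only [pathsG, SimpleGraph.fromRel_adj]
    refine ⟨?_, Or.inl ⟨rfl, rfl⟩⟩
    intro h
    simp [p, q] at h
  have hc : ∀ x, ∃ y, (y = p x ∨ y = q x) ∧ f y ∈ A := by
    intro x
    obtain ⟨h1, h2⟩ := hφ s(p x, q x) (hpq x)
    have hp := h2 (p x) (by simp)
    have hq := h2 (q x) (by simp)
    by_contra hcon
    push Not at hcon
    have h3 := (Finset.mem_filter.1 h1).2
    rw [Finset.card_le_one] at h3
    have := h3 (f (p x)) (by simp [hp, hcon (p x) (Or.inl rfl)])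
      (f (q x)) (by simp [hq, hcon (q x) (Or.inr rfl)])
    exact (hpq x).ne (hf this)
  choose c hc1 hc2 using hc
  have hinj : Function.Injective c := by
    rintro ⟨i, x⟩ ⟨j, y⟩ h
    have h1 := hc1 ⟨i, x⟩
    have h2 := hc1 ⟨j, y⟩
    rw [h] at h1
    rcases h1 with h1 | h1 <;> rcases h2 with h2 | h2 <;>
    · rw [h1] at h2
      simp only [p, q, Sigma.mk.injEq] at h2
      obtain ⟨rfl, h2⟩ := h2
      have h3 := Fin.val_eq_of_eq (eq_of_heq h2)
      simp only at h3
      first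
        | omega
        | (obtain rfl : x = y := Fin.ext (by omega)
           rfl)
  have hcard : Fintype.card (Σ i : Fin k, Fin (m i + 1)) ≤ A.card := by
    rw [← Fintype.card_coe]
    exact Fintype.card_le_of_injective (fun x => (⟨f (c x), hc2 x⟩ : A))
      (fun x y h => hinj (hf (by simpa using h)))
  rw [Fintype.card_sigma] at hcard
  simp only [Fintype.card_fin] at hcard
  have : ∑ i, (ℓ i + 1) = 2 * ∑ i, (m i + 1) := by
    rw [Finset.mul_sum]
    exact Finset.sum_congr rfl (fun i _ => by rw [hm i]; ring)
  omega

lemma coneH_connected {V : Type*} [Fintype V] [DecidableEq V] (A : Finset V) (r : ℕ)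
    (hr : 2 ≤ r) (hrA : r ≤ A.card) : HyperConnected (coneH A r) := by
  obtain ⟨a, ha⟩ : A.Nonempty := Finset.card_pos.1 (by omega)
  have key : ∀ u : V, ∃ e ∈ coneH A r, u ∈ e ∧ a ∈ e := by
    intro u
    obtain ⟨e, h1, h2, h3⟩ := Finset.exists_subsuperset_card_eq
      (s := {u, a}) (t := insert u A) (n := r)
      (by intro x; simp only [Finset.mem_insert, Finset.mem_singleton]; rintro (rfl | rfl) <;> simp [ha])
      (Finset.card_le_two.trans hr) (hrA.trans (Finset.card_le_card (Finset.subset_insert _ _)))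
    refine ⟨e, ?_, h1 (by simp), h1 (by simp)⟩
    simp only [coneH, Finset.mem_filter, Finset.mem_powersetCard_univ]
    refine ⟨h3, Finset.card_le_one.2 ?_⟩
    have : ∀ x ∈ e \ A, x = u := by
      intro x hx
      rw [Finset.mem_sdiff] at hx
      exact (Finset.mem_insert.1 (h2 hx.1)).resolve_right hx.2
    intro x hx y hy
    rw [this x hx, this y hy]
  intro u v
  obtain ⟨e, he, h1, h2⟩ := key u
  obtain ⟨e', he', h1', h2'⟩ := key v
  exact (Relation.ReflTransGen.single ⟨e, he, h1, h2⟩).tail ⟨e', he', h2', h1'⟩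

lemma coneH_card {V : Type*} [Fintype V] [DecidableEq V] (A : Finset V) (r : ℕ) (hr : 1 ≤ r) :
    A.card.choose (r - 1) * (Fintype.card V - A.card) + A.card.choose r ≤ (coneH A r).card := by
  have hdisj : Disjoint (A.powersetCard r)
      ((univ \ A).biUnion (fun x => (A.powersetCard (r - 1)).image (insert x))) := by
    rw [Finset.disjoint_left]
    intro e he he'
    simp only [Finset.mem_biUnion, Finset.mem_image, Finset.mem_sdiff] at he'
    obtain ⟨x, ⟨-, hx⟩, e0, -, rfl⟩ := he'
    exact hx ((Finset.mem_powersetCard.1 he).1 (Finset.mem_insert_self _ _))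
  have hsub : A.powersetCard r ∪
      (univ \ A).biUnion (fun x => (A.powersetCard (r - 1)).image (insert x)) ⊆ coneH A r := by
    intro e he
    simp only [coneH, Finset.mem_filter, Finset.mem_powersetCard_univ]
    rcases Finset.mem_union.1 he with he | he
    · obtain ⟨h1, h2⟩ := Finset.mem_powersetCard.1 he
      exact ⟨h2, by rw [Finset.sdiff_eq_empty_iff_subset.2 h1]; simp⟩
    · simp only [Finset.mem_biUnion, Finset.mem_image, Finset.mem_sdiff] at he
      obtain ⟨x, ⟨-, hx⟩, e0, he0, rfl⟩ := he
      obtain ⟨h1, h2⟩ := Finset.mem_powersetCard.1 he0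
      refine ⟨by rw [Finset.card_insert_of_notMem (fun h => hx (h1 h)), h2]; omega, ?_⟩
      refine (Finset.card_le_card (t := {x}) ?_).trans (by simp)
      intro y hy
      simp only [Finset.mem_sdiff, Finset.mem_insert] at hy
      rcases hy.1 with h | h
      · simp [h]
      · exact absurd (h1 h) hy.2
  refine le_trans (le_of_eq ?_) (Finset.card_le_card hsub)
  rw [Finset.card_union_of_disjoint hdisj, Finset.card_powersetCard, Finset.card_biUnion]
  · rw [Finset.sum_congr rfl (g := fun _ => A.card.choose (r - 1))]
    · rw [Finset.sum_const, Finset.card_sdiff_of_subset (Finset.subset_univ _), Finset.card_univ,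
        smul_eq_mul]
      ring
    · intro x hx
      rw [Finset.mem_sdiff] at hx
      rw [Finset.card_image_of_injOn, Finset.card_powersetCard]
      intro e he e' he' h
      have h1 : x ∉ e := fun h => hx.2 ((Finset.mem_powersetCard.1 he).1 h)
      have h2 : x ∉ e' := fun h => hx.2 ((Finset.mem_powersetCard.1 he').1 h)
      rw [← Finset.erase_insert h1, h, Finset.erase_insert h2]
  · intro x hx y hy hxy
    simp only [Function.onFun]
    rw [Finset.disjoint_left]
    intro e he he'
    simp only [Finset.mem_image] at he he'
    obtain ⟨e0, h0, rfl⟩ := he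
    obtain ⟨e1, h1, h⟩ := he'
    have : x ∈ insert y e1 := h ▸ Finset.mem_insert_self x e0
    rcases Finset.mem_insert.1 this with hmem | hmem
    · exact hxy hmem
    · exact (Finset.mem_sdiff.1 hx).2 ((Finset.mem_powersetCard.1 h1).1 hmem)

/-! ### Rigidity around a complete bipartite core -/

/-- If all pairs between `A` and `B` have distinct representing hyperedges `ψ a b`, there is an
alternating Berge path through given equally large parts of `A` and `B`. -/
lemma exists_alternating {V : Type*} [DecidableEq V] {A B : Finset V} (hAB : Disjoint A B)
    (ψ : V → V → Finset V) (hψ : ∀ a ∈ A, ∀ b ∈ B, a ∈ ψ a b ∧ b ∈ ψ a b)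
    (hinj : ∀ a ∈ A, ∀ b ∈ B, ∀ a' ∈ A, ∀ b' ∈ B, ψ a b = ψ a' b' → a = a' ∧ b = b') (j : ℕ) :
    ∀ A' ⊆ A, ∀ B' ⊆ B, A'.card = j + 1 → B'.card = j + 1 → ∀ a ∈ A',
      ∃ l es, Links (a :: l) es ∧ (a :: l).Nodup ∧ es.Nodup ∧ (a :: l).length = 2 * (j + 1) ∧
        (∀ v ∈ a :: l, v ∈ A' ∪ B') ∧ ∀ e ∈ es, ∃ a ∈ A', ∃ b ∈ B', e = ψ a b := by
  induction j with
  | zero =>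
    intro A' hA' B' hB' hA hB a ha
    obtain ⟨b, hb⟩ : B'.Nonempty := Finset.card_pos.1 (by omega)
    refine ⟨[b], [ψ a b], .cons (hψ a (hA' ha) b (hB' hb)).1 (hψ a (hA' ha) b (hB' hb)).2
      (.single b), ?_, by simp, by simp, by simp [ha, hb], by simpa using ⟨a, ha, b, hb, rfl⟩⟩
    have : a ≠ b := fun h => Finset.disjoint_left.1 hAB (hA' ha) (h ▸ hB' hb)
    simpa using this
  | succ j ih =>
    intro A' hA' B' hB' hA hB a ha
    obtain ⟨b, hb⟩ : B'.Nonempty := Finset.card_pos.1 (by omega)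
    have hA1 : (A'.erase a).card = j + 1 := by rw [Finset.card_erase_of_mem ha]; omega
    have hB1 : (B'.erase b).card = j + 1 := by rw [Finset.card_erase_of_mem hb]; omega
    obtain ⟨a', ha'⟩ : (A'.erase a).Nonempty := Finset.card_pos.1 (by omega)
    obtain ⟨l, es, h1, h2, h3, h4, h5, h6⟩ := ih (A'.erase a)
      ((Finset.erase_subset _ _).trans hA') (B'.erase b)
      ((Finset.erase_subset _ _).trans hB') hA1 hB1 a' ha'
    have ha'' := Finset.mem_of_mem_erase ha'
    have haa : a ≠ a' := fun h => by simp [h] at ha'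
    have hab : a ≠ b := fun h => Finset.disjoint_left.1 hAB (hA' ha) (h ▸ hB' hb)
    have hal : a ∉ a' :: l := by
      intro h
      have := h5 a h
      simp only [Finset.mem_union, Finset.mem_erase] at this
      rcases this with h | h
      · exact h.1 rfl
      · exact Finset.disjoint_left.1 hAB (hA' ha) (hB' h.2)
    have hbl : b ∉ a' :: l := by
      intro h
      have := h5 b h
      simp only [Finset.mem_union, Finset.mem_erase] at this
      rcases this with h | h
      · exact Finset.disjoint_left.1 hAB (hA' h.2) (hB' hb)
      · exact h.1 rfl
    have hes : ∀ c ∈ A', ψ c b ∉ es := by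
      intro c hc h
      obtain ⟨c', hc', b', hb', h⟩ := h6 _ h
      have := (hinj c (hA' hc) b (hB' hb) c' (hA' (Finset.mem_of_mem_erase hc')) b'
        (hB' (Finset.mem_of_mem_erase hb')) h).2
      simp [← this] at hb'
    refine ⟨b :: a' :: l, ψ a b :: ψ a' b :: es, ?_, ?_, ?_, ?_, ?_, ?_⟩
    · exact .cons (hψ a (hA' ha) b (hB' hb)).1 (hψ a (hA' ha) b (hB' hb)).2
        (.cons (hψ a' (hA' ha'') b (hB' hb)).2 (hψ a' (hA' ha'') b (hB' hb)).1 h1)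
    · rw [List.nodup_cons, List.nodup_cons]
      refine ⟨?_, hbl, h2⟩
      rw [List.mem_cons]
      exact not_or.2 ⟨hab, hal⟩
    · rw [List.nodup_cons, List.nodup_cons]
      refine ⟨?_, hes a' ha'', h3⟩
      rw [List.mem_cons]
      exact not_or.2 ⟨fun h => haa (hinj a (hA' ha) b (hB' hb) a' (hA' ha'') b (hB' hb) h).1,
        hes a ha⟩
    · simp only [List.length_cons] at h4 ⊢
      omega
    · intro v hv
      rw [List.mem_cons, List.mem_cons] at hv
      rcases hv with rfl | rfl | hv
      · simp [ha]
      · simp [hb]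
      · have := h5 v hv
        simp only [Finset.mem_union, Finset.mem_erase] at this ⊢
        tauto
    · intro e he
      rw [List.mem_cons, List.mem_cons] at he
      rcases he with rfl | rfl | he
      · exact ⟨a, ha, b, hb, rfl⟩
      · exact ⟨a', ha'', b, hb, rfl⟩
      · obtain ⟨c, hc, d, hd, h⟩ := h6 e he
        exact ⟨c, Finset.mem_of_mem_erase hc, d, Finset.mem_of_mem_erase hd, h⟩

/-- Once a complete bipartite core `A`, `B` with `|A| = t` is present, an edge meeting `A` cannot be
continued outside `A` by a second edge; otherwise the alternating path through the core extends to
`2t + 2` vertices.  The surplus of `B` is used to avoid `x`, `y` and the core pairs represented by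
`g` and `g'`. -/
lemma no_exit {V : Type*} [DecidableEq V] {H : Finset (Finset V)} {t : ℕ} (ht : 1 ≤ t)
    (hP : ¬ HasBP H (2 * t + 2)) {A B : Finset V} (hAB : Disjoint A B) (hA : A.card = t)
    (hB : t + 4 ≤ B.card)
    (ψ : V → V → Finset V) (hψH : ∀ a ∈ A, ∀ b ∈ B, ψ a b ∈ H)
    (hψ : ∀ a ∈ A, ∀ b ∈ B, a ∈ ψ a b ∧ b ∈ ψ a b)
    (hinj : ∀ a ∈ A, ∀ b ∈ B, ∀ a' ∈ A, ∀ b' ∈ B, ψ a b = ψ a' b' → a = a' ∧ b = b')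
    {a x y : V} {g g' : Finset V} (ha : a ∈ A) (hx : x ∉ A) (hy : y ∉ A) (hxy : x ≠ y)
    (hg : g ∈ H) (hg' : g' ∈ H) (hgg : g ≠ g') (hag : a ∈ g) (hxg : x ∈ g) (hxg' : x ∈ g')
    (hyg' : y ∈ g') : False := by
  classical
  have hone : ∀ f : Finset V, (B.filter (fun b => ∃ a ∈ A, ψ a b = f)).card ≤ 1 := by
    intro f
    rw [Finset.card_le_one]
    intro b hb b' hb'
    rw [Finset.mem_filter] at hb hb'
    obtain ⟨hb, c, hc, h⟩ := hb
    obtain ⟨hb', c', hc', h'⟩ := hb'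
    exact (hinj c hc b hb c' hc' b' hb' (h.trans h'.symm)).2
  set bad := ({x, y} : Finset V) ∪ (B.filter (fun b => ∃ a ∈ A, ψ a b = g) ∪
    B.filter (fun b => ∃ a ∈ A, ψ a b = g')) with hbad
  have hbadc : bad.card ≤ 4 := by
    have h1 := Finset.card_union_le ({x, y} : Finset V) (B.filter (fun b => ∃ a ∈ A, ψ a b = g) ∪
      B.filter (fun b => ∃ a ∈ A, ψ a b = g'))
    have h2 := Finset.card_union_le (B.filter (fun b => ∃ a ∈ A, ψ a b = g))
      (B.filter (fun b => ∃ a ∈ A, ψ a b = g'))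
    have h3 : ({x, y} : Finset V).card ≤ 2 := Finset.card_le_two
    have := hone g
    have := hone g'
    rw [← hbad] at h1
    omega
  have hc : t ≤ (B \ bad).card := by
    have := Finset.le_card_sdiff bad B
    omega
  obtain ⟨B', hB', hB'c⟩ := Finset.exists_subset_card_eq hc
  have hB'B : B' ⊆ B := hB'.trans Finset.sdiff_subset
  obtain ⟨l, es, h1, h2, h3, h4, h5, h6⟩ := exists_alternating hAB ψ hψ hinj (t - 1) A
    (Finset.Subset.refl _) B' hB'B (by omega) (by omega) a ha
  have hgood : ∀ b ∈ B', b ≠ x ∧ b ≠ y ∧ ∀ a ∈ A, ψ a b ≠ g ∧ ψ a b ≠ g' := by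
    intro b hb
    have h := Finset.mem_sdiff.1 (hB' hb)
    simp only [hbad, Finset.mem_union, Finset.mem_insert, Finset.mem_singleton,
      Finset.mem_filter, not_or, not_and, not_exists] at h
    exact ⟨h.2.1.1, h.2.1.2, fun a ha => ⟨h.2.2.1 h.1 a ha, h.2.2.2 h.1 a ha⟩⟩
  have hnl : ∀ z, z ∉ A → (z = x ∨ z = y) → z ∉ a :: l := by
    intro z hz hzz h
    rcases Finset.mem_union.1 (h5 z h) with h | h
    · exact hz h
    · have := hgood z h
      tauto
  have hne : ∀ f, (f = g ∨ f = g') → f ∉ es := by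
    intro f hf h
    obtain ⟨c, hc, b, hb, rfl⟩ := h6 f h
    have := (hgood b hb).2.2 c hc
    tauto
  refine hP ⟨y :: x :: a :: l, g' :: g :: es, .cons hyg' hxg' (.cons hxg hag h1), ?_, ?_, ?_, ?_⟩
  · rw [List.nodup_cons, List.nodup_cons]
    refine ⟨?_, hnl x hx (Or.inl rfl), h2⟩
    rw [List.mem_cons]
    exact not_or.2 ⟨hxy.symm, hnl y hy (Or.inr rfl)⟩
  · rw [List.nodup_cons, List.nodup_cons]
    refine ⟨?_, hne g (Or.inl rfl), h3⟩
    rw [List.mem_cons]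
    exact not_or.2 ⟨hgg.symm, hne g' (Or.inr rfl)⟩
  · intro e he
    rw [List.mem_cons, List.mem_cons] at he
    rcases he with rfl | rfl | he
    · exact hg'
    · exact hg
    · obtain ⟨c, hc, b, hb, rfl⟩ := h6 e he
      exact hψH c hc b (hB'B hb)
  · simp only [List.length_cons] at h4 ⊢
    omega

/-- The sharp count: in the presence of the core, every vertex outside `A` is responsible for at
most `C(t, r-1)` edges, since an edge with two vertices outside `A` is the only edge through each of
them. -/
lemma card_le_of_core {V : Type*} [Fintype V] [DecidableEq V] {H : Finset (Finset V)} {t r : ℕ}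
    (hr : 2 ≤ r) (hrt : r ≤ t) (hunif : ∀ e ∈ H, e.card = r) (hconn : HyperConnected H)
    (hP : ¬ HasBP H (2 * t + 2)) {A B : Finset V} (hAB : Disjoint A B) (hA : A.card = t)
    (hB : t + 4 ≤ B.card)
    (ψ : V → V → Finset V) (hψH : ∀ a ∈ A, ∀ b ∈ B, ψ a b ∈ H)
    (hψ : ∀ a ∈ A, ∀ b ∈ B, a ∈ ψ a b ∧ b ∈ ψ a b)
    (hinj : ∀ a ∈ A, ∀ b ∈ B, ∀ a' ∈ A, ∀ b' ∈ B, ψ a b = ψ a' b' → a = a' ∧ b = b') :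
    H.card ≤ t.choose (r - 1) * (Fintype.card V - t) + t.choose r := by
  classical
  have hexit : ∀ {a x y : V} {g g' : Finset V}, a ∈ A → x ∉ A → y ∉ A → x ≠ y → g ∈ H → g' ∈ H →
      g ≠ g' → a ∈ g → x ∈ g → x ∈ g' → y ∈ g' → False := fun ha hx hy hxy hg hg' hgg h1 h2 h3 h4 =>
    no_exit (by omega) hP hAB hA hB ψ hψH hψ hinj ha hx hy hxy hg hg' hgg h1 h2 h3 h4
  obtain ⟨a₀, ha₀⟩ : A.Nonempty := Finset.card_pos.1 (by omega)
  -- if some edge missed `A`, then `hexit` would spread this to all edges along connectedness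
  have hmeet : ∀ h ∈ H, ∃ a ∈ A, a ∈ h := by
    intro h hh
    by_contra hcon
    push Not at hcon
    obtain ⟨x₀, hx₀⟩ : h.Nonempty := Finset.card_pos.1 (by rw [hunif h hh]; omega)
    have hcl : ∀ v, Relation.ReflTransGen (fun a b => ∃ e ∈ H, a ∈ e ∧ b ∈ e) x₀ v →
        v ∉ A ∧ ∀ e ∈ H, v ∈ e → ∀ a ∈ A, a ∉ e := by
      have step : ∀ f ∈ H, (∀ a ∈ A, a ∉ f) → ∀ y ∈ f,
          y ∉ A ∧ ∀ e ∈ H, y ∈ e → ∀ a ∈ A, a ∉ e := by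
        intro f hf hfA y hy
        have hyA : y ∉ A := fun h => hfA y h hy
        refine ⟨hyA, ?_⟩
        intro e he hye a ha hae
        obtain ⟨z, hz, hzy⟩ := Finset.exists_mem_ne (by rw [hunif f hf]; omega) y
        exact hexit ha hyA (fun h => hfA z h hz) hzy.symm he hf
          (fun h => hfA a ha (h ▸ hae)) hae hye hy hz
      intro v hv
      induction hv with
      | refl => exact step h hh hcon x₀ hx₀
      | tail _ hvw ih =>
        obtain ⟨e, he, hve, hwe⟩ := hvw
        exact step e he (ih.2 e he hve) _ hwe
    exact (hcl a₀ (hconn x₀ a₀)).1 ha₀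
  have honly : ∀ h ∈ H, 2 ≤ (h \ A).card → ∀ x ∈ h \ A, ∀ g ∈ H, x ∈ g → g = h := by
    intro h hh h2 x hx g hg hxg
    by_contra hne
    rw [Finset.mem_sdiff] at hx
    obtain ⟨a, ha, hag⟩ := hmeet g hg
    obtain ⟨y, hy, hyx⟩ := Finset.exists_mem_ne h2 x
    rw [Finset.mem_sdiff] at hy
    exact hexit ha hx.2 hy.2 hyx.symm hg hh hne hag hxg hx.1 hy.1
  have hch : ∀ h : Finset V, ∃ x : V, ¬ h ⊆ A → x ∈ h \ A := by
    intro h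
    by_cases hA : h ⊆ A
    · exact ⟨a₀, fun h => absurd hA h⟩
    · obtain ⟨x, hx, hxA⟩ := Finset.not_subset.1 hA
      exact ⟨x, fun _ => Finset.mem_sdiff.2 ⟨hx, hxA⟩⟩
  choose c hc using hch
  have h0 : (H.filter (fun h => h ⊆ A)).card ≤ t.choose r := by
    rw [← hA, ← Finset.card_powersetCard]
    apply Finset.card_le_card
    intro h hh
    rw [Finset.mem_filter] at hh
    exact Finset.mem_powersetCard.2 ⟨hh.2, hunif h hh.1⟩
  have h1 : (H.filter (fun h => ¬ h ⊆ A)).card ≤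
      t.choose (r - 1) * ((univ : Finset V) \ A).card := by
    apply Finset.card_le_mul_card_image_of_maps_to (f := c)
    · intro h hh
      rw [Finset.mem_filter] at hh
      have := Finset.mem_sdiff.1 (hc h hh.2)
      simp [this.2]
    · intro x _
      by_cases hbig : ∃ h ∈ H, c h = x ∧ ¬ h ⊆ A ∧ 2 ≤ (h \ A).card
      · obtain ⟨h, hh, hcx, hA', h2⟩ := hbig
        have hxh : x ∈ h \ A := hcx ▸ hc h hA'
        refine le_trans ?_ (Nat.choose_pos (by omega) : 0 < t.choose (r - 1))
        rw [Finset.card_le_one]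
        have : ∀ g ∈ (H.filter (fun h => ¬ h ⊆ A)).filter (fun g => c g = x), g = h := by
          intro g hg
          simp only [Finset.mem_filter] at hg
          exact honly h hh h2 x hxh g hg.1.1
            (Finset.mem_sdiff.1 (hg.2 ▸ hc g hg.1.2)).1
        intro g hg g' hg'
        rw [this g hg, this g' hg']
      · push Not at hbig
        rw [← hA, ← Finset.card_powersetCard]
        apply Finset.card_le_card_of_injOn (fun g => g.erase x)
        · intro g hg
          simp only [Finset.coe_filter, Finset.mem_filter, Set.mem_ofPred_eq] at hg
          have hxg := hg.2 ▸ hc g hg.1.2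
          have hlt := hbig g hg.1.1 hg.2 hg.1.2
          have hxg' := Finset.mem_sdiff.1 hxg
          rw [Finset.mem_coe, Finset.mem_powersetCard]
          refine ⟨?_, by rw [Finset.card_erase_of_mem hxg'.1, hunif g hg.1.1]⟩
          intro y hy
          rw [Finset.mem_erase] at hy
          by_contra hyA
          have := (Finset.card_le_one.1 (by omega : (g \ A).card ≤ 1)) y
            (Finset.mem_sdiff.2 ⟨hy.2, hyA⟩) x hxg
          exact hy.1 this
        · intro g hg g' hg' h
          simp only [Finset.coe_filter, Finset.mem_filter, Set.mem_ofPred_eq] at hg hg'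
          have hxg := (Finset.mem_sdiff.1 (hg.2 ▸ hc g hg.1.2)).1
          have hxg' := (Finset.mem_sdiff.1 (hg'.2 ▸ hc g' hg'.1.2)).1
          rw [← Finset.insert_erase hxg, ← Finset.insert_erase hxg']
          exact congrArg _ h
  rw [Finset.card_sdiff_of_subset (Finset.subset_univ _), Finset.card_univ, hA] at h1
  have := Finset.card_filter_add_card_filter_not (s := H) (fun h => h ⊆ A)
  omega

/-! ### Representing pairs -/

lemma hall_on {ι α : Type*} [DecidableEq ι] [DecidableEq α] [Inhabited α] (S : Finset ι)
    (t : ι → Finset α) (h : ∀ X ⊆ S, X.card ≤ (X.biUnion t).card) :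
    ∃ f : ι → α, Set.InjOn f S ∧ ∀ x ∈ S, f x ∈ t x := by
  obtain ⟨f, hf, hft⟩ := (Finset.all_card_le_biUnion_card_iff_exists_injective
    (fun x : S => t x)).1 (by
      intro s
      have := h (s.map (Function.Embedding.subtype _)) (by
        intro x hx
        obtain ⟨y, -, rfl⟩ := Finset.mem_map.1 hx
        exact y.2)
      rw [Finset.card_map] at this
      refine this.trans (Finset.card_le_card ?_)
      intro a ha
      simp only [Finset.mem_biUnion, Finset.mem_map] at ha ⊢
      obtain ⟨x, ⟨y, hy, rfl⟩, ha⟩ := ha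
      exact ⟨y, hy, ha⟩)
  refine ⟨fun x => if hx : x ∈ S then f ⟨x, hx⟩ else default, ?_, ?_⟩
  · intro x hx y hy hxy
    have hx' : x ∈ S := hx
    have hy' : y ∈ S := hy
    simp only [hx', hy', dif_pos] at hxy
    simpa using hf hxy
  · intro x hx
    simp only [hx, dif_pos]
    exact hft ⟨x, hx⟩

/-- A set `E` of pairs with an injective choice `φ` of hyperedges containing them, and an injective
encoding `T` of all hyperedges: either `T h` is a pair in `E` outside the blue part `Bl`, or
`T h = h` and all pairs of `h` are blue.  A subfamily `R` maximising `|R| - |∂R|`, where `∂R` is the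
set of pairs covered by `R`, provides this: blue pairs are those of `∂R`, and maximality is
precisely Hall's condition both for `H \ R` into the pairs outside `∂R` and for `∂R` into `R`. -/
lemma hall_split {V : Type*} [DecidableEq V] (H : Finset (Finset V)) (hH : ∀ h ∈ H, h.card ≠ 2) :
    ∃ (E Bl : Finset (Finset V)) (φ T : Finset V → Finset V), Bl ⊆ E ∧
      (∀ p ∈ E, p.card = 2 ∧ φ p ∈ H ∧ p ⊆ φ p) ∧ Set.InjOn φ E ∧
      (∀ h ∈ H, T h ⊆ h ∧ ((T h ∈ E ∧ T h ∉ Bl) ∨ (T h = h ∧ h.powersetCard 2 ⊆ Bl))) ∧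
      Set.InjOn T H := by
  classical
  let D : Finset (Finset V) → Finset (Finset V) := fun R => R.biUnion (fun h => h.powersetCard 2)
  obtain ⟨R, hR, hmax⟩ := Finset.exists_max_image H.powerset
    (fun R => (R.card : ℤ) - (D R).card) ⟨∅, by simp⟩
  rw [Finset.mem_powerset] at hR
  obtain ⟨ρ, hρ, hρt⟩ := hall_on (H \ R) (fun h => h.powersetCard 2 \ D R) (by
    intro X hX
    have hXR : Disjoint R X := Finset.disjoint_left.2 (fun h h1 h2 =>
      (Finset.mem_sdiff.1 (hX h2)).2 h1)
    have h1 := hmax (R ∪ X) (Finset.mem_powerset.2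
      (Finset.union_subset hR (hX.trans Finset.sdiff_subset)))
    rw [Finset.card_union_of_disjoint hXR] at h1
    have h2 : (D (R ∪ X)).card ≤ (D R).card +
        (X.biUnion (fun h => h.powersetCard 2 \ D R)).card := by
      refine le_trans (Finset.card_le_card ?_) (Finset.card_union_le _ _)
      intro p hp
      by_cases hpR : p ∈ D R
      · exact Finset.mem_union_left _ hpR
      · apply Finset.mem_union_right
        obtain ⟨h, hh, hp⟩ := Finset.mem_biUnion.1 hp
        rcases Finset.mem_union.1 hh with hh | hh
        · exact absurd (Finset.mem_biUnion.2 ⟨h, hh, hp⟩) hpR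
        · exact Finset.mem_biUnion.2 ⟨h, hh, Finset.mem_sdiff.2 ⟨hp, hpR⟩⟩
    push_cast at h1
    omega)
  obtain ⟨f, hf, hft⟩ := hall_on (D R) (fun p => R.filter (fun h => p ⊆ h)) (by
    intro Y hY
    set N := Y.biUnion (fun p => R.filter (fun h => p ⊆ h)) with hN
    have hNR : N ⊆ R := Finset.biUnion_subset.2 (fun p _ => Finset.filter_subset _ _)
    have h1 := hmax (R \ N) (Finset.mem_powerset.2 (Finset.sdiff_subset.trans hR))
    rw [Finset.card_sdiff_of_subset hNR] at h1
    have h2 : (D (R \ N)).card ≤ (D R \ Y).card := by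
      apply Finset.card_le_card
      intro p hp
      obtain ⟨h, hh, hp⟩ := Finset.mem_biUnion.1 hp
      rw [Finset.mem_sdiff] at hh
      refine Finset.mem_sdiff.2 ⟨Finset.mem_biUnion.2 ⟨h, hh.1, hp⟩, fun hpY => hh.2 ?_⟩
      exact Finset.mem_biUnion.2 ⟨p, hpY, Finset.mem_filter.2
        ⟨hh.1, (Finset.mem_powersetCard.1 hp).1⟩⟩
    rw [Finset.card_sdiff_of_subset hY] at h2
    have h3 := Finset.card_le_card hNR
    have h4 := Finset.card_le_card hY
    rw [Nat.cast_sub h3] at h1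
    omega)
  have hρ1 : ∀ h ∈ H \ R, (ρ h ⊆ h ∧ (ρ h).card = 2) ∧ ρ h ∉ D R := by
    intro h hh
    have := hρt h hh
    rwa [Finset.mem_sdiff, Finset.mem_powersetCard] at this
  have hf1 : ∀ p ∈ D R, f p ∈ R ∧ p ⊆ f p := fun p hp => Finset.mem_filter.1 (hft p hp)
  have hinv : ∀ h ∈ H \ R, Function.invFunOn ρ (↑(H \ R)) (ρ h) = h := by
    intro h hh
    exact hρ.leftInvOn_invFunOn hh
  let φ : Finset V → Finset V := fun p =>
    if p ∈ D R then f p else Function.invFunOn ρ (↑(H \ R)) p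
  have hφR : ∀ p ∈ D R, φ p = f p := fun p hp => if_pos hp
  have hφρ : ∀ h ∈ H \ R, φ (ρ h) = h := fun h hh => by
    simp only [φ, if_neg (hρ1 h hh).2]
    exact hinv h hh
  refine ⟨D R ∪ (H \ R).image ρ, D R, φ, fun h => if h ∈ R then h else ρ h,
    Finset.subset_union_left, ?_, ?_, ?_, ?_⟩
  · intro p hp
    rcases Finset.mem_union.1 hp with hp | hp
    · obtain ⟨h, hh, hp'⟩ := Finset.mem_biUnion.1 hp
      rw [hφR p hp]
      exact ⟨(Finset.mem_powersetCard.1 hp').2, hR (hf1 p hp).1, (hf1 p hp).2⟩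
    · obtain ⟨h, hh, rfl⟩ := Finset.mem_image.1 hp
      rw [hφρ h hh]
      exact ⟨(hρ1 h hh).1.2, (Finset.mem_sdiff.1 hh).1, (hρ1 h hh).1.1⟩
  · intro p hp q hq hpq
    rcases Finset.mem_union.1 hp with hp | hp <;> rcases Finset.mem_union.1 hq with hq | hq
    · rw [hφR p hp, hφR q hq] at hpq
      exact hf hp hq hpq
    · obtain ⟨h, hh, rfl⟩ := Finset.mem_image.1 hq
      rw [hφR p hp, hφρ h hh] at hpq
      exact absurd (hpq ▸ (hf1 p hp).1) (Finset.mem_sdiff.1 hh).2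
    · obtain ⟨h, hh, rfl⟩ := Finset.mem_image.1 hp
      rw [hφR q hq, hφρ h hh] at hpq
      exact absurd (hpq ▸ (hf1 q hq).1) (Finset.mem_sdiff.1 hh).2
    · obtain ⟨h, hh, rfl⟩ := Finset.mem_image.1 hp
      obtain ⟨h', hh', rfl⟩ := Finset.mem_image.1 hq
      rw [hφρ h hh, hφρ h' hh'] at hpq
      rw [hpq]
  · intro h hh
    by_cases hhR : h ∈ R
    · simp only [if_pos hhR]
      exact ⟨Finset.Subset.refl _, Or.inr ⟨trivial, fun p hp => Finset.mem_biUnion.2 ⟨h, hhR, hp⟩⟩⟩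
    · have hh' := Finset.mem_sdiff.2 ⟨hh, hhR⟩
      simp only [if_neg hhR]
      exact ⟨(hρ1 h hh').1.1, Or.inl ⟨Finset.mem_union_right _ (Finset.mem_image_of_mem _ hh'),
        (hρ1 h hh').2⟩⟩
  · intro h hh h' hh' heq
    by_cases hhR : h ∈ R <;> by_cases hhR' : h' ∈ R
    · simpa only [if_pos hhR, if_pos hhR'] using heq
    · simp only [if_pos hhR, if_neg hhR'] at heq
      exact absurd (heq ▸ (hρ1 h' (Finset.mem_sdiff.2 ⟨hh', hhR'⟩)).1.2) (hH h hh)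
    · simp only [if_neg hhR, if_pos hhR'] at heq
      exact absurd (heq ▸ (hρ1 h (Finset.mem_sdiff.2 ⟨hh, hhR⟩)).1.2) (hH h' hh')
    · simp only [if_neg hhR, if_neg hhR'] at heq
      exact hρ (Finset.mem_sdiff.2 ⟨hh, hhR⟩) (Finset.mem_sdiff.2 ⟨hh', hhR'⟩) heq

/-! ### Longest paths in graphs of large minimum degree -/

/-- `v 0, …, v m` is a path of the graph `G` with all vertices in `W`.  The values of `v` beyond `m`
are irrelevant. -/
def GP {V : Type*} (G : SimpleGraph V) (W : Finset V) (v : ℕ → V) (m : ℕ) : Prop :=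
  (∀ i ≤ m, v i ∈ W) ∧ (∀ i ≤ m, ∀ j ≤ m, v i = v j → i = j) ∧ ∀ i < m, G.Adj (v i) (v (i + 1))

section GraphPaths

variable {V : Type*} {G : SimpleGraph V} {W : Finset V} {v : ℕ → V} {m : ℕ}

lemma GP.reverse (h : GP G W v m) : GP G W (fun i => v (m - i)) m := by
  refine ⟨fun i _ => h.1 _ (by omega), fun i hi j hj hij => ?_, fun i hi => ?_⟩
  · have := h.2.1 _ (by omega) _ (by omega) hij
    omega
  · have := h.2.2 (m - (i + 1)) (by omega)
    rw [show m - (i + 1) + 1 = m - i by omega] at this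
    exact this.symm

lemma GP.prepend (h : GP G W v m) {x : V} (hx : x ∈ W) (hne : ∀ i ≤ m, x ≠ v i)
    (hadj : G.Adj x (v 0)) : GP G W (fun i => if i = 0 then x else v (i - 1)) (m + 1) := by
  refine ⟨fun i hi => ?_, fun i hi j hj hij => ?_, fun i hi => ?_⟩
  · beta_reduce
    split_ifs with h0
    · exact hx
    · exact h.1 _ (by omega)
  · simp only at hij
    split_ifs at hij with h1 h2 h2
    · omega
    · exact absurd hij (hne _ (by omega))
    · exact absurd hij.symm (hne _ (by omega))
    · have := h.2.1 _ (by omega) _ (by omega) hij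
      omega
  · simp only
    rw [if_neg (by omega : ¬ i + 1 = 0), Nat.add_sub_cancel]
    split_ifs with h1
    · rw [h1]; exact hadj
    · have := h.2.2 (i - 1) (by omega)
      rwa [show i - 1 + 1 = i by omega] at this

/-- A cycle, given as a path with adjacent ends, can be opened at any of its vertices. -/
lemma GP.rotate (h : GP G W v m) (hc : G.Adj (v m) (v 0)) {k : ℕ} (hk : k ≤ m) :
    ∃ u, GP G W u m ∧ u 0 = v k ∧ ∀ i ≤ m, ∃ j ≤ m, u i = v j := by
  refine ⟨fun i => if i + k ≤ m then v (i + k) else v (i + k - m - 1),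
    ⟨fun i hi => ?_, fun i hi j hj hij => ?_, fun i hi => ?_⟩, ?_, fun i hi => ?_⟩
  · beta_reduce
    split_ifs
    · exact h.1 _ (by omega)
    · exact h.1 _ (by omega)
  · simp only at hij
    split_ifs at hij with h1 h2 h2
    all_goals
      have := h.2.1 _ (by omega) _ (by omega) hij
      omega
  · simp only
    split_ifs with h1 h2 h2
    · have := h.2.2 (i + k) (by omega)
      rwa [show i + k + 1 = i + 1 + k by omega] at this
    · rw [show i + k = m by omega, show i + 1 + k - m - 1 = 0 by omega]
      exact hc
    · omega
    · have := h.2.2 (i + k - m - 1) (by omega)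
      rwa [show i + k - m - 1 + 1 = i + 1 + k - m - 1 by omega] at this
  · simp [hk]
  · simp only
    split_ifs
    · exact ⟨_, by omega, rfl⟩
    · exact ⟨_, by omega, rfl⟩

lemma GP.cycle_prepend (h : GP G W v m) (hc : G.Adj (v m) (v 0)) {x : V} (hx : x ∈ W)
    (hne : ∀ i ≤ m, x ≠ v i) {k : ℕ} (hk : k ≤ m) (hadj : G.Adj x (v k)) :
    ∃ u, GP G W u (m + 1) ∧ u 0 = x ∧ ∀ i ≤ m + 1, u i = x ∨ ∃ j ≤ m, u i = v j := by
  obtain ⟨u, hu, hu0, huv⟩ := h.rotate hc hk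
  refine ⟨_, hu.prepend hx (fun i hi => ?_) (hu0 ▸ hadj), if_pos rfl, fun i hi => ?_⟩
  · obtain ⟨j, hj, hij⟩ := huv i hi
    rw [hij]
    exact hne j hj
  · split_ifs with h0
    · exact Or.inl rfl
    · exact Or.inr (huv _ (by omega))

/-- Connectedness yields an edge leaving a set that does not exhaust `W`. -/
lemma exists_exit [DecidableEq V] (hconn : ∀ x ∈ W, ∀ y ∈ W, G.Reachable x y)
    (hW : ∀ x y, G.Adj x y → x ∈ W ∧ y ∈ W) {S : Finset V} (hS : S ⊆ W) (hne : S.Nonempty)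
    (hlt : S.card < W.card) : ∃ x ∈ W, x ∉ S ∧ ∃ y ∈ S, G.Adj x y := by
  obtain ⟨a, ha⟩ := hne
  obtain ⟨b, hb, hbS⟩ : ∃ b ∈ W, b ∉ S := by
    by_contra hcon
    push Not at hcon
    exact absurd (Finset.card_le_card hcon) (by omega)
  obtain ⟨p⟩ := hconn a (hS ha) b hb
  obtain ⟨d, -, h1, h2⟩ := p.exists_boundary_dart (S : Set V) ha hbS
  exact ⟨d.snd, (hW _ _ d.adj).2, h2, d.fst, h1, d.adj.symm⟩

lemma GP.card_image [DecidableEq V] (h : GP G W v m) :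
    ((range (m + 1)).image v).card = m + 1 := by
  rw [Finset.card_image_of_injOn, Finset.card_range]
  intro i hi j hj hij
  simp only [Finset.coe_range, Set.mem_Iio] at hi hj
  exact h.2.1 _ (by omega) _ (by omega) hij

lemma GP.image_subset [DecidableEq V] (h : GP G W v m) : (range (m + 1)).image v ⊆ W := by
  intro x hx
  obtain ⟨i, hi, rfl⟩ := Finset.mem_image.1 hx
  exact h.1 i (by simp at hi; omega)

/-- A longest path does not close up to a cycle unless it is spanning. -/
lemma GP.no_cycle [DecidableEq V] (hconn : ∀ x ∈ W, ∀ y ∈ W, G.Reachable x y)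
    (hW : ∀ x y, G.Adj x y → x ∈ W ∧ y ∈ W) (h : GP G W v m)
    (hmax : ¬ ∃ u, GP G W u (m + 1)) (hlt : m + 1 < W.card) : ¬ G.Adj (v m) (v 0) := by
  intro hc
  obtain ⟨x, hx, hxS, y, hy, hxy⟩ := exists_exit hconn hW h.image_subset
    ⟨v 0, Finset.mem_image_of_mem _ (by simp)⟩ (by rw [h.card_image]; exact hlt)
  obtain ⟨k, hk, rfl⟩ := Finset.mem_image.1 hy
  obtain ⟨u, hu, -⟩ := h.cycle_prepend hc hx (fun i hi hxi => hxS (Finset.mem_image.2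
    ⟨i, by simp; omega, hxi.symm⟩)) (by simp at hk; omega) hxy
  exact hmax ⟨u, hu⟩

lemma GP.nbr_first (hW : ∀ x y, G.Adj x y → x ∈ W ∧ y ∈ W) (h : GP G W v m)
    (hmax : ¬ ∃ u, GP G W u (m + 1)) {x : V} (hx : G.Adj (v 0) x) :
    ∃ i < m, x = v (i + 1) := by
  by_contra hcon
  push Not at hcon
  refine hmax ⟨_, h.prepend (hW _ _ hx).2 (fun i hi => ?_) hx.symm⟩
  rcases Nat.eq_zero_or_pos i with rfl | hi0
  · exact hx.ne'
  · have := hcon (i - 1) (by omega)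
    rwa [show i - 1 + 1 = i by omega] at this

lemma GP.nbr_last (hW : ∀ x y, G.Adj x y → x ∈ W ∧ y ∈ W) (h : GP G W v m)
    (hmax : ¬ ∃ u, GP G W u (m + 1)) {x : V} (hx : G.Adj (v m) x) : ∃ i < m, x = v i := by
  obtain ⟨i, hi, hix⟩ := h.reverse.nbr_first hW hmax (x := x) (by simpa using hx)
  exact ⟨m - (i + 1), by omega, hix⟩

/-- Dirac's counting at the ends of a longest path with at most `2t` edges: it has exactly `2t`
edges, and for each `i < 2t` exactly one of `v 0 ∼ v (i+1)` and `v (2t) ∼ v i` holds, each of the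
two for exactly `t` indices. -/
lemma GP.dirac [DecidableEq V] {t : ℕ} (hconn : ∀ x ∈ W, ∀ y ∈ W, G.Reachable x y)
    (hW : ∀ x y, G.Adj x y → x ∈ W ∧ y ∈ W)
    (hdeg : ∀ x ∈ W, ∀ S : Finset V, (∀ y, G.Adj x y → y ∈ S) → t ≤ S.card)
    (h : GP G W v m) (hmax : ¬ ∃ u, GP G W u (m + 1)) (hlt : m + 1 < W.card) (hm : m ≤ 2 * t) :
    m = 2 * t ∧ ∃ I J : Finset ℕ, (∀ i, i ∈ I ↔ i < m ∧ G.Adj (v 0) (v (i + 1))) ∧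
      (∀ i, i ∈ J ↔ i < m ∧ G.Adj (v m) (v i)) ∧ I.card = t ∧ J.card = t ∧ Disjoint I J ∧
      I ∪ J = range m := by
  classical
  set I := (range m).filter (fun i => G.Adj (v 0) (v (i + 1))) with hI
  set J := (range m).filter (fun i => G.Adj (v m) (v i)) with hJ
  have hIm : ∀ i, i ∈ I ↔ i < m ∧ G.Adj (v 0) (v (i + 1)) := by simp [hI]
  have hJm : ∀ i, i ∈ J ↔ i < m ∧ G.Adj (v m) (v i) := by simp [hJ]
  have hIc : t ≤ I.card := by
    refine (hdeg (v 0) (h.1 0 (by omega)) (I.image (fun i => v (i + 1))) ?_).trans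
      Finset.card_image_le
    intro y hy
    obtain ⟨i, hi, rfl⟩ := h.nbr_first hW hmax hy
    exact Finset.mem_image.2 ⟨i, (hIm i).2 ⟨hi, hy⟩, rfl⟩
  have hJc : t ≤ J.card := by
    refine (hdeg (v m) (h.1 m le_rfl) (J.image v) ?_).trans Finset.card_image_le
    intro y hy
    obtain ⟨i, hi, rfl⟩ := h.nbr_last hW hmax hy
    exact Finset.mem_image.2 ⟨i, (hJm i).2 ⟨hi, hy⟩, rfl⟩
  have hdisj : Disjoint I J := by
    rw [Finset.disjoint_left]
    intro p hpI hpJ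
    obtain ⟨hp, h1⟩ := (hIm p).1 hpI
    obtain ⟨-, h2⟩ := (hJm p).1 hpJ
    -- the cycle `v 0, …, v p, v m, …, v (p+1)` spans the path
    have hc : GP G W (fun i => if i ≤ p then v i else v (m + p + 1 - i)) m := by
      refine ⟨fun i hi => ?_, fun i hi j hj hij => ?_, fun i hi => ?_⟩
      · beta_reduce
        split_ifs
        · exact h.1 _ (by omega)
        · exact h.1 _ (by omega)
      · simp only at hij
        split_ifs at hij with h1 h2 h2
        all_goals
          have := h.2.1 _ (by omega) _ (by omega) hij
          omega
      · simp only
        split_ifs with h3 h4 h4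
        · exact h.2.2 i (by omega)
        · rw [show i = p by omega, show m + p + 1 - (p + 1) = m by omega]
          exact h2.symm
        · omega
        · have := h.2.2 (m + p + 1 - (i + 1)) (by omega)
          rw [show m + p + 1 - (i + 1) + 1 = m + p + 1 - i by omega] at this
          exact this.symm
    refine hc.no_cycle hconn hW hmax hlt ?_
    simp only [Nat.zero_le, if_true]
    rw [if_neg (by omega), show m + p + 1 - m = p + 1 by omega]
    exact h1.symm
  have hsub : I ∪ J ⊆ range m := Finset.union_subset (Finset.filter_subset _ _)
    (Finset.filter_subset _ _)
  have hc1 := Finset.card_le_card hsub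
  rw [Finset.card_union_of_disjoint hdisj, Finset.card_range] at hc1
  refine ⟨by omega, I, J, hIm, hJm, by omega, by omega, hdisj, ?_⟩
  apply Finset.eq_of_subset_of_card_le hsub
  rw [Finset.card_union_of_disjoint hdisj, Finset.card_range]
  omega

/-- A large connected graph with minimum degree at least `t` and no path with `2t+1` edges has a
cycle of length `2t`, unless some `t` vertices have all their neighbours in a common `(t+1)`-set. -/
lemma cycle_or_clique [DecidableEq V] {t : ℕ} (ht : 1 ≤ t)
    (hconn : ∀ x ∈ W, ∀ y ∈ W, G.Reachable x y)
    (hW : ∀ x y, G.Adj x y → x ∈ W ∧ y ∈ W)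
    (hdeg : ∀ x ∈ W, ∀ S : Finset V, (∀ y, G.Adj x y → y ∈ S) → t ≤ S.card)
    (hP : ¬ ∃ u, GP G W u (2 * t + 1)) (hlt : 2 * t + 1 < W.card) :
    (∃ c, GP G W c (2 * t - 1) ∧ G.Adj (c (2 * t - 1)) (c 0)) ∨
    ∃ Z ⊆ W, ∃ z ∈ Z, Z.card = t + 1 ∧ ∀ u ∈ Z, u ≠ z → ∀ y, G.Adj u y → y ∈ Z := by
  classical
  obtain ⟨w, hw⟩ : W.Nonempty := Finset.card_pos.1 (by omega)
  have h0 : ∃ u, GP G W u 0 := ⟨fun _ => w, fun _ _ => hw, by intros; omega, by intros; omega⟩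
  have hs := Nat.findGreatest_spec (P := fun m => ∃ u, GP G W u m) (Nat.zero_le (2 * t)) h0
  set m := Nat.findGreatest (fun m => ∃ u, GP G W u m) (2 * t) with hm
  have hm2 : m ≤ 2 * t := Nat.findGreatest_le _
  have hmax : ¬ ∃ u, GP G W u (m + 1) := by
    rcases Nat.lt_or_ge m (2 * t) with h | h
    · exact Nat.findGreatest_is_greatest (P := fun m => ∃ u, GP G W u m) (Nat.lt_succ_self m) h
    · rwa [show m = 2 * t by omega]
  obtain ⟨v, hv⟩ := hs
  obtain ⟨hmt, I, J, hI, hJ, hIc, hJc, hIJ, hIJu⟩ :=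
    hv.dirac hconn hW hdeg hmax (by omega) hm2
  clear_value m
  subst hmt
  by_cases hcr : ∃ p, p + 1 < 2 * t ∧ p ∈ J ∧ p + 1 ∈ I
  · left
    obtain ⟨p, hp, hpJ, hpI⟩ := hcr
    have h1 := ((hI _).1 hpI).2
    have h2 := ((hJ _).1 hpJ).2
    refine ⟨fun i => if i ≤ p then v i else v (2 * t + p + 1 - i),
      ⟨fun i hi => ?_, fun i hi j hj hij => ?_, fun i hi => ?_⟩, ?_⟩
    · beta_reduce
      split_ifs
      · exact hv.1 _ (by omega)
      · exact hv.1 _ (by omega)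
    · simp only at hij
      split_ifs at hij with h1 h2 h2
      all_goals
        have := hv.2.1 _ (by omega) _ (by omega) hij
        omega
    · simp only
      split_ifs with h3 h4 h4
      · exact hv.2.2 i (by omega)
      · rw [show i = p by omega, show 2 * t + p + 1 - (p + 1) = 2 * t by omega]
        exact h2.symm
      · omega
      · have := hv.2.2 (2 * t + p + 1 - (i + 1)) (by omega)
        rw [show 2 * t + p + 1 - (i + 1) + 1 = 2 * t + p + 1 - i by omega] at this
        exact this.symm
    · simp only [Nat.zero_le, if_true]
      rw [if_neg (by omega), show 2 * t + p + 1 - (2 * t - 1) = p + 1 + 1 by omega]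
      exact h1.symm
  · right
    push Not at hcr
    -- without such a crossing `J` is an up-set, so `I = {0,…,t-1}` and `J = {t,…,2t-1}`
    have hup : ∀ i ∈ J, ∀ d, i + d < 2 * t → i + d ∈ J := by
      intro i hi d
      induction d with
      | zero => intro _; exact hi
      | succ d ih =>
        intro hd
        have h1 := hcr (i + d) hd (ih (by omega))
        have h2 : i + d + 1 ∈ I ∪ J := by rw [hIJu, Finset.mem_range]; omega
        exact (Finset.mem_union.1 h2).resolve_left h1
    have hJt : ∀ i ∈ J, t ≤ i := by
      intro i hi
      have h1 : Finset.Ico i (2 * t) ⊆ J := by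
        intro j hj
        rw [Finset.mem_Ico] at hj
        have := hup i hi (j - i) (by omega)
        rwa [show i + (j - i) = j by omega] at this
      have := Finset.card_le_card h1
      rw [Nat.card_Ico] at this
      omega
    have hJe : J = Finset.Ico t (2 * t) := by
      apply Finset.eq_of_subset_of_card_le
      · intro i hi
        exact Finset.mem_Ico.2 ⟨hJt i hi, ((hJ i).1 hi).1⟩
      · rw [Nat.card_Ico]; omega
    have hIt : ∀ i < t, i ∈ I := by
      intro i hi
      have h2 : i ∈ I ∪ J := by rw [hIJu, Finset.mem_range]; omega
      exact (Finset.mem_union.1 h2).resolve_right (fun h => by have := hJt i h; omega)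
    have hvt : GP G W v t := ⟨fun i hi => hv.1 i (by omega),
      fun i hi j hj => hv.2.1 i (by omega) j (by omega), fun i hi => hv.2.2 i (by omega)⟩
    refine ⟨(range (t + 1)).image v, hvt.image_subset, v t,
      Finset.mem_image_of_mem _ (by simp), hvt.card_image, ?_⟩
    intro u hu hne y hy
    obtain ⟨q, hq, rfl⟩ := Finset.mem_image.1 hu
    rw [Finset.mem_range] at hq
    have hqt : q < t := by
      rcases Nat.lt_or_ge q t with h | h
      · exact h
      · exact absurd (by rw [show q = t by omega]) hne
    have hqI := ((hI q).1 (hIt q hqt)).2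
    -- rotating at the edge `v 0 ∼ v (q+1)` makes `v q` the first vertex of a longest path
    have hr : GP G W (fun i => if i ≤ q then v (q - i) else v i) (2 * t) := by
      refine ⟨fun i hi => ?_, fun i hi j hj hij => ?_, fun i hi => ?_⟩
      · beta_reduce
        split_ifs
        · exact hv.1 _ (by omega)
        · exact hv.1 _ (by omega)
      · simp only at hij
        split_ifs at hij with h1 h2 h2
        all_goals
          have := hv.2.1 _ (by omega) _ (by omega) hij
          omega
      · simp only
        split_ifs with h3 h4 h4
        · have := hv.2.2 (q - (i + 1)) (by omega)
          rw [show q - (i + 1) + 1 = q - i by omega] at this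
          exact this.symm
        · rw [show i = q by omega, Nat.sub_self]
          exact hqI
        · omega
        · exact hv.2.2 i (by omega)
    obtain ⟨-, I', J', hI', hJ', -, -, hIJ', -⟩ :=
      hr.dirac hconn hW hdeg hmax (by omega) le_rfl
    obtain ⟨j, hj, rfl⟩ := hr.nbr_first hW hmax (x := y) (by simpa using hy)
    have hjI : j ∈ I' := (hI' j).2 ⟨hj, by simpa using hy⟩
    have hjt : j < t := by
      by_contra hcon
      have hjJ : j ∈ J := by rw [hJe, Finset.mem_Ico]; omega
      refine Finset.disjoint_left.1 hIJ' hjI ((hJ' j).2 ⟨hj, ?_⟩)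
      rw [if_neg (by omega), if_neg (by omega)]
      exact ((hJ j).1 hjJ).2
    split_ifs
    · exact Finset.mem_image_of_mem _ (by simp; omega)
    · exact Finset.mem_image_of_mem _ (by simp; omega)

/-- Around a cycle of length `2t` all other vertices send their edges to the cycle only, so many of
them have the same neighbourhood. -/
lemma core_of_cycle [Fintype V] [DecidableEq V] {t : ℕ} (ht : 1 ≤ t)
    (hconn : ∀ x ∈ W, ∀ y ∈ W, G.Reachable x y)
    (hW : ∀ x y, G.Adj x y → x ∈ W ∧ y ∈ W)
    (hdeg : ∀ x ∈ W, ∀ S : Finset V, (∀ y, G.Adj x y → y ∈ S) → t ≤ S.card)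
    (hP : ¬ ∃ u, GP G W u (2 * t + 1)) (hlt : 2 * t + 2 ^ (2 * t) * (t + 4) < W.card)
    {c : ℕ → V} (hc : GP G W c (2 * t - 1)) (hcc : G.Adj (c (2 * t - 1)) (c 0)) :
    ∃ A B : Finset V, Disjoint A B ∧ A.card = t ∧ t + 4 ≤ B.card ∧
      ∀ a ∈ A, ∀ b ∈ B, G.Adj a b := by
  classical
  set C := (range (2 * t - 1 + 1)).image c with hC
  have hCc : C.card = 2 * t := by rw [hc.card_image]; omega
  have hCW : C ⊆ W := hc.image_subset
  have hCm : ∀ x, x ∈ C ↔ ∃ k ≤ 2 * t - 1, x = c k := by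
    intro x
    simp only [hC, Finset.mem_image, Finset.mem_range]
    exact ⟨fun ⟨k, hk, h⟩ => ⟨k, by omega, h.symm⟩, fun ⟨k, hk, h⟩ => ⟨k, by omega, h.symm⟩⟩
  have hno : ∀ x ∉ C, ∀ y ∉ C, G.Adj x y → ∀ z ∈ C, ¬ G.Adj x z := by
    intro x hx y hy hxy z hz hxz
    obtain ⟨k, hk, rfl⟩ := (hCm z).1 hz
    obtain ⟨u, hu, hu0, huc⟩ := hc.cycle_prepend hcc (hW _ _ hxy).1
      (fun i hi h => hx ((hCm x).2 ⟨i, hi, h⟩)) hk hxz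
    have := hu.prepend (x := y) (hW _ _ hxy).2 (by
      intro i hi h
      rcases huc i hi with h' | ⟨j, hj, h'⟩
      · rw [h'] at h
        exact hxy.ne' h
      · exact hy ((hCm y).2 ⟨j, hj, h.trans h'⟩)) (by rw [hu0]; exact hxy.symm)
    rw [show 2 * t - 1 + 1 + 1 = 2 * t + 1 by omega] at this
    exact hP ⟨_, this⟩
  have hc0 : c 0 ∈ C := (hCm _).2 ⟨0, by omega, rfl⟩
  have hatt : ∀ x ∈ W, x ∉ C → ∃ z ∈ C, G.Adj x z := by
    intro x hx hxC
    by_contra hcon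
    obtain ⟨p⟩ := hconn _ (hCW hc0) x hx
    obtain ⟨d, -, h1, h2⟩ := p.exists_boundary_dart
      {y | y ∈ C ∨ ∃ z ∈ C, G.Adj y z} (Or.inl hc0) (by
        rintro (h | h)
        · exact hxC h
        · exact hcon h)
    have h3 : d.snd ∉ C := fun h => h2 (Or.inl h)
    have h4 : d.fst ∉ C := fun h => h2 (Or.inr ⟨_, h, d.adj.symm⟩)
    obtain ⟨z, hz, hdz⟩ := h1.resolve_left h4
    exact hno _ h4 _ h3 d.adj z hz hdz
  have hN : ∀ x ∈ W \ C, univ.filter (fun y => G.Adj x y) ∈ C.powerset := by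
    intro x hx
    rw [Finset.mem_sdiff] at hx
    rw [Finset.mem_powerset]
    intro y hy
    by_contra hyC
    obtain ⟨z, hz, hxz⟩ := hatt x hx.1 hx.2
    exact hno x hx.2 y hyC (Finset.mem_filter.1 hy).2 z hz hxz
  obtain ⟨N, hNC, hNB⟩ := Finset.exists_lt_card_fiber_of_mul_lt_card_of_maps_to
    (f := fun x => univ.filter (fun y => G.Adj x y)) (n := t + 4) hN (by
      rw [Finset.card_powerset, hCc, Finset.card_sdiff_of_subset hCW]
      omega)
  set B := (W \ C).filter (fun x => univ.filter (fun y => G.Adj x y) = N) with hB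
  have hBm : ∀ b ∈ B, (b ∈ W ∧ b ∉ C) ∧ ∀ y, G.Adj b y ↔ y ∈ N := by
    intro b hb
    rw [hB, Finset.mem_filter, Finset.mem_sdiff] at hb
    exact ⟨hb.1, fun y => by rw [← hb.2]; simp⟩
  obtain ⟨b, hb⟩ : B.Nonempty := Finset.card_pos.1 (by omega)
  obtain ⟨A, hAN, hAc⟩ := Finset.exists_subset_card_eq
    (hdeg b (hBm b hb).1.1 N (fun y hy => ((hBm b hb).2 y).1 hy))
  refine ⟨A, B, ?_, hAc, by omega, fun a ha b hb => (((hBm b hb).2 a).2 (hAN ha)).symm⟩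
  rw [Finset.disjoint_left]
  intro a ha hb
  exact (hBm a hb).1.2 (Finset.mem_powerset.1 hNC (hAN ha))

end GraphPaths

/-! ### Distinct components of the edge graph give a long Berge path -/

/-- A path of the graph `G` lifted to a Berge path by means of the map `φ` on its edges. -/
def Lifted {V : Type*} [DecidableEq V] (G : SimpleGraph V) (φ : Finset V → Finset V) (l : List V)
    (es : List (Finset V)) : Prop :=
  Links l es ∧ l.Nodup ∧ es.Nodup ∧ ∀ f ∈ es, ∃ c ∈ l, ∃ d ∈ l, G.Adj c d ∧ f = φ {c, d}

/-- The vertices at distance at most `i` from `X` in the hypergraph `H`. -/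
def Lev {V : Type*} (H : Finset (Finset V)) (X : Set V) : ℕ → Set V
  | 0 => X
  | i + 1 => Lev H X i ∪ {v | ∃ e ∈ H, v ∈ e ∧ ∃ u ∈ e, u ∈ Lev H X i}

lemma Lev_mono {V : Type*} {H : Finset (Finset V)} {X : Set V} {i j : ℕ} (hij : i ≤ j) : Lev H X i ⊆ Lev H X j := by
  induction j, hij using Nat.le_induction with
  | base => exact fun _ h => h
  | succ j _ ih => exact fun x hx => Or.inl (ih hx)

section Components

variable {V : Type*} [DecidableEq V] {G : SimpleGraph V} {φ : Finset V → Finset V}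
  {H : Finset (Finset V)}

lemma Lifted.cons (hφ : ∀ u v, G.Adj u v → φ {u, v} ∈ H ∧ u ∈ φ {u, v} ∧ v ∈ φ {u, v})
    (hinj : ∀ u v x y, G.Adj u v → G.Adj x y → φ {u, v} = φ {x, y} → ({u, v} : Finset V) = {x, y})
    {x y : V} {l : List V} {es : List (Finset V)} (h : Lifted G φ (x :: l) es)
    (hy : y ∉ x :: l) (hadj : G.Adj y x) : Lifted G φ (y :: x :: l) (φ {y, x} :: es) := by
  obtain ⟨h1, h2, h3, h4⟩ := h
  refine ⟨.cons (hφ _ _ hadj).2.1 (hφ _ _ hadj).2.2 h1, List.nodup_cons.2 ⟨hy, h2⟩,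
    List.nodup_cons.2 ⟨fun hmem => ?_, h3⟩, fun f hf => ?_⟩
  · obtain ⟨c, hc, d, hd, hcd, hf⟩ := h4 _ hmem
    have h5 := hinj _ _ _ _ hadj hcd hf
    have h6 : y ∈ ({c, d} : Finset V) := h5 ▸ by simp
    rw [Finset.mem_insert, Finset.mem_singleton] at h6
    rcases h6 with rfl | rfl
    · exact hy hc
    · exact hy hd
  · rcases List.mem_cons.1 hf with rfl | hf
    · exact ⟨y, by simp, x, by simp, hadj, rfl⟩
    · obtain ⟨c, hc, d, hd, hcd, hf⟩ := h4 _ hf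
      exact ⟨c, List.mem_cons_of_mem _ hc, d, List.mem_cons_of_mem _ hd, hcd, hf⟩

lemma GP.hasBP {W : Finset V} {v : ℕ → V} {m : ℕ}
    (hφ : ∀ u v, G.Adj u v → φ {u, v} ∈ H ∧ u ∈ φ {u, v} ∧ v ∈ φ {u, v})
    (hinj : ∀ u v x y, G.Adj u v → G.Adj x y → φ {u, v} = φ {x, y} → ({u, v} : Finset V) = {x, y})
    (h : GP G W v m) : HasBP H (m + 1) := by
  have key : ∀ q ≤ m, ∃ l es, Lifted G φ (v q :: l) es ∧ l.length = q ∧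
      ∀ x ∈ v q :: l, ∃ i ≤ q, x = v i := by
    intro q
    induction q with
    | zero => exact fun _ => ⟨[], [], ⟨.single _, by simp, by simp, by simp⟩, rfl, by simp⟩
    | succ q ih =>
      intro hq
      obtain ⟨l, es, h1, h2, h3⟩ := ih (by omega)
      refine ⟨v q :: l, _, h1.cons hφ hinj (fun hmem => ?_) (h.2.2 q (by omega)).symm,
        by simp [h2], fun x hx => ?_⟩
      · obtain ⟨i, hi, hvi⟩ := h3 _ hmem
        have := h.2.1 _ hq _ (by omega) hvi
        omega
      · rcases List.mem_cons.1 hx with rfl | hx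
        · exact ⟨_, le_rfl, rfl⟩
        · obtain ⟨i, hi, hvi⟩ := h3 _ hx
          exact ⟨i, by omega, hvi⟩
  obtain ⟨l, es, ⟨h1, h2, h3, h4⟩, h5, -⟩ := key m le_rfl
  refine ⟨_, _, h1, h2, h3, fun f hf => ?_, by simp [h5]⟩
  obtain ⟨c, -, d, -, hcd, rfl⟩ := h4 f hf
  exact (hφ _ _ hcd).1

/-- In a component `X` of minimum degree at least `t ≥ 2` one can start a Berge path on `t + 1`
vertices inside any hyperedge `e` meeting `X`, without using `e` itself. -/
lemma greedy {t : ℕ} (ht : 2 ≤ t) {X : Set V}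
    (hφ : ∀ u v, G.Adj u v → φ {u, v} ∈ H ∧ u ∈ φ {u, v} ∧ v ∈ φ {u, v})
    (hinj : ∀ u v x y, G.Adj u v → G.Adj x y → φ {u, v} = φ {x, y} → ({u, v} : Finset V) = {x, y})
    (hX : ∀ x y, x ∈ X → G.Adj x y → y ∈ X)
    (hdeg : ∀ x ∈ X, ∀ S : Finset V, (∀ y, G.Adj x y → y ∈ S) → t ≤ S.card)
    {e : Finset V} {u : V} (hu : u ∈ e) (huX : u ∈ X) :
    ∃ l es, Links l es ∧ (∀ x ∈ l.head?, x ∈ e) ∧ l.Nodup ∧ es.Nodup ∧ e ∉ es ∧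
      l.length = t + 1 ∧ (∀ x ∈ l, x ∈ X) ∧
      ∀ f ∈ es, ∃ c ∈ X, ∃ d ∈ X, G.Adj c d ∧ f = φ {c, d} := by
  -- if `e` lifts an edge `ab` of the component, the path starts at `a` and avoids the edge `ab`
  obtain ⟨a, b, hae, haX, hab⟩ : ∃ a b, a ∈ e ∧ a ∈ X ∧
      ∀ c ∈ X, ∀ d, G.Adj c d → e = φ {c, d} → ({c, d} : Finset V) = {a, b} := by
    by_cases h : ∃ c ∈ X, ∃ d, G.Adj c d ∧ e = φ {c, d}
    · obtain ⟨c, hc, d, hcd, he⟩ := h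
      exact ⟨c, d, he ▸ (hφ _ _ hcd).2.1, hc,
        fun c' _ d' hcd' he' => hinj _ _ _ _ hcd' hcd (he'.symm.trans he)⟩
    · exact ⟨u, u, hu, huX, fun c hc d hcd he => absurd ⟨c, hc, d, hcd, he⟩ h⟩
  have key : ∀ m ≤ t, ∃ x l es, Lifted G φ (x :: l) es ∧ l.length = m ∧ e ∉ es ∧
      (∀ z ∈ x :: l, z ∈ X) ∧ (x :: l).getLast? = some a := by
    intro m
    induction m with
    | zero =>
      exact fun _ => ⟨a, [], [], ⟨.single _, by simp, by simp, by simp⟩, rfl, by simp,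
        by simpa using haX, rfl⟩
    | succ m ih =>
      intro hm
      obtain ⟨x, l, es, h1, h2, h3, h4, h5⟩ := ih (by omega)
      have hxX := h4 x (by simp)
      obtain ⟨y, hxy, hyl, hyb⟩ : ∃ y, G.Adj x y ∧ y ∉ l ∧ (m = 0 → y ≠ b) := by
        by_contra hcon
        push Not at hcon
        have h6 := hdeg x hxX (if m = 0 then {b} else l.toFinset) (fun y hy => by
          by_cases hyl : y ∈ l
          · have hm0 : m ≠ 0 := by
              rintro rfl
              rw [List.length_eq_zero_iff] at h2
              simp [h2] at hyl
            rw [if_neg hm0]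
            exact List.mem_toFinset.2 hyl
          · obtain ⟨hm0, rfl⟩ := hcon y hy hyl
            simp [hm0])
        have h7 := List.toFinset_card_le l
        split_ifs at h6
        · simp at h6
          omega
        · omega
      have hyxl : y ∉ x :: l := by
        rw [List.mem_cons]
        rintro (rfl | h)
        · exact G.irrefl hxy
        · exact hyl h
      refine ⟨y, x :: l, _, h1.cons hφ hinj hyxl hxy.symm, by simp [h2], ?_, ?_, ?_⟩
      · rw [List.mem_cons]
        rintro (he | he)
        · have h6 := hab y (hX _ _ hxX hxy) x hxy.symm he
          have hal : a ∈ x :: l := List.mem_of_getLast? h5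
          have h7 : a ∈ ({y, x} : Finset V) := h6 ▸ by simp
          have h8 : y ∈ ({a, b} : Finset V) := h6 ▸ by simp
          rw [Finset.mem_insert, Finset.mem_singleton] at h7 h8
          have hya : y ≠ a := fun h => hyxl (h ▸ hal)
          have hyb' := h8.resolve_left hya
          obtain rfl := h7.resolve_left hya.symm
          refine hyb ?_ hyb'
          rw [← h2, List.length_eq_zero_iff]
          cases l with
          | nil => rfl
          | cons z l =>
            rw [List.getLast?_cons_cons] at h5
            exact absurd (List.mem_of_getLast? h5) (List.nodup_cons.1 h1.2.1).1
        · exact h3 he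
      · intro z hz
        rcases List.mem_cons.1 hz with rfl | hz
        · exact hX _ _ hxX hxy
        · exact h4 z hz
      · rw [List.getLast?_cons_cons]
        exact h5
  obtain ⟨x, l, es, ⟨h1, h2, h3, h4⟩, h5, h6, h7, h8⟩ := key t le_rfl
  refine ⟨_, _, h1.reverse, ?_, List.nodup_reverse.2 h2, List.nodup_reverse.2 h3,
    by simpa using h6, by simp [h5], fun z hz => h7 z (List.mem_reverse.1 hz), fun f hf => ?_⟩
  · rw [List.head?_reverse, h8]
    simpa using hae
  · obtain ⟨c, hc, d, hd, hcd, hf⟩ := h4 f (List.mem_reverse.1 hf)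
    exact ⟨c, h7 c hc, d, h7 d hd, hcd, hf⟩

/-- From the component `X` a Berge path can be led out to any hyperedge `e` leaving the ball
`Lev H X i` it meets.  Its hyperedges either meet a smaller ball or lift edges of `X`. -/
lemma lead_out {t : ℕ} (ht : 2 ≤ t) {X : Set V}
    (hφ : ∀ u v, G.Adj u v → φ {u, v} ∈ H ∧ u ∈ φ {u, v} ∧ v ∈ φ {u, v})
    (hinj : ∀ u v x y, G.Adj u v → G.Adj x y → φ {u, v} = φ {x, y} → ({u, v} : Finset V) = {x, y})
    (hX : ∀ x y, x ∈ X → G.Adj x y → y ∈ X)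
    (hdeg : ∀ x ∈ X, ∀ S : Finset V, (∀ y, G.Adj x y → y ∈ S) → t ≤ S.card) (i : ℕ) :
    ∀ e ∈ H, (∃ u ∈ e, u ∈ Lev H X i) → (∃ w ∈ e, w ∉ Lev H X i) →
      ∃ l es, Links l es ∧ (∀ x ∈ l.head?, x ∈ e) ∧ l.Nodup ∧ es.Nodup ∧ e ∉ es ∧
        (∀ f ∈ es, f ∈ H) ∧ t + 1 ≤ l.length ∧ (∀ x ∈ l, x ∈ Lev H X i) ∧
        ∀ f ∈ es, (∃ j < i, ∃ x ∈ f, x ∈ Lev H X j) ∨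
          ∃ c ∈ X, ∃ d ∈ X, G.Adj c d ∧ f = φ {c, d} := by
  induction i with
  | zero =>
    rintro e he ⟨u, hue, huX⟩ -
    obtain ⟨l, es, h1, h2, h3, h4, h5, h6, h7, h8⟩ := greedy ht hφ hinj hX hdeg hue huX
    refine ⟨l, es, h1, h2, h3, h4, h5, fun f hf => ?_, by omega, h7, fun f hf => Or.inr (h8 f hf)⟩
    obtain ⟨c, -, d, -, hcd, rfl⟩ := h8 f hf
    exact (hφ _ _ hcd).1
  | succ i ih =>
    rintro e he ⟨u, hue, hu⟩ ⟨w, hwe, hw⟩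
    have hei : ∀ z ∈ e, z ∉ Lev H X i := fun z hz hzi => hw (Or.inr ⟨e, he, hwe, z, hz, hzi⟩)
    obtain ⟨e', he', hue', hx⟩ := hu.resolve_left (hei u hue)
    obtain ⟨l, es, h1, h2, h3, h4, h5, h6, h7, h8, h9⟩ := ih e' he' hx ⟨u, hue', hei u hue⟩
    cases l with
    | nil => simp at h7
    | cons z l =>
    have hee' : e ≠ e' := by
      rintro rfl
      obtain ⟨x, hxe, hxi⟩ := hx
      exact hei x hxe hxi
    have hees : e ∉ es := by
      intro hmem
      rcases h9 e hmem with ⟨j, hj, x, hxe, hxj⟩ | ⟨c, hc, d, hd, hcd, rfl⟩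
      · exact hei x hxe (Lev_mono hj.le hxj)
      · exact hei c (hφ _ _ hcd).2.1 (Lev_mono (Nat.zero_le i) hc)
    refine ⟨u :: z :: l, e' :: es, .cons hue' (h2 z (by simp)) h1, by simpa using hue,
      List.nodup_cons.2 ⟨fun h => hei u hue (h8 u h), h3⟩, List.nodup_cons.2 ⟨h5, h4⟩,
      by simp [hee', hees], ?_, by rw [List.length_cons]; omega, ?_, ?_⟩
    · intro f hf
      rcases List.mem_cons.1 hf with rfl | hf
      · exact he'
      · exact h6 f hf
    · intro x hx
      rcases List.mem_cons.1 hx with rfl | hx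
      · exact hu
      · exact Or.inl (h8 x hx)
    · intro f hf
      rcases List.mem_cons.1 hf with rfl | hf
      · exact Or.inl ⟨i, by omega, hx⟩
      · rcases h9 f hf with ⟨j, hj, h⟩ | h
        · exact Or.inl ⟨j, by omega, h⟩
        · exact Or.inr h

/-- Two components of minimum degree at least `t` would be joined by a Berge path through at least
`t + 1` vertices of each. -/
lemma reachable_of_no_path {t : ℕ} (ht : 2 ≤ t) {W : Finset V} (hconn : HyperConnected H)
    (hP : ¬ HasBP H (2 * t + 2))
    (hφ : ∀ u v, G.Adj u v → φ {u, v} ∈ H ∧ u ∈ φ {u, v} ∧ v ∈ φ {u, v})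
    (hinj : ∀ u v x y, G.Adj u v → G.Adj x y → φ {u, v} = φ {x, y} → ({u, v} : Finset V) = {x, y})
    (hW : ∀ x y, G.Adj x y → x ∈ W ∧ y ∈ W)
    (hdeg : ∀ x ∈ W, ∀ S : Finset V, (∀ y, G.Adj x y → y ∈ S) → t ≤ S.card) :
    ∀ x ∈ W, ∀ y ∈ W, G.Reachable x y := by
  intro x₀ hx₀ y₀ hy₀
  by_contra hnot
  have hWr : ∀ x ∈ W, ∀ y, G.Reachable x y → y ∈ W := by
    rintro x hx y ⟨p⟩
    induction p with
    | nil => exact hx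
    | cons h p ih => exact ih (hW _ _ h).2
  set X : Set V := {z | G.Reachable x₀ z} with hXdef
  set Y : Set V := {z | G.Reachable y₀ z} with hYdef
  have hXa : ∀ x y, x ∈ X → G.Adj x y → y ∈ X := fun x y hx h => hx.trans h.reachable
  have hYa : ∀ x y, x ∈ Y → G.Adj x y → y ∈ Y := fun x y hx h => hx.trans h.reachable
  have hXd : ∀ x ∈ X, ∀ S : Finset V, (∀ y, G.Adj x y → y ∈ S) → t ≤ S.card :=
    fun x hx => hdeg x (hWr _ hx₀ _ hx)
  have hYd : ∀ x ∈ Y, ∀ S : Finset V, (∀ y, G.Adj x y → y ∈ S) → t ≤ S.card :=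
    fun x hx => hdeg x (hWr _ hy₀ _ hx)
  have hXY : ∀ z ∈ X, z ∉ Y := fun z hz hz' => hnot (hz.trans hz'.symm)
  have hex : ∃ i, ∃ z ∈ Y, z ∈ Lev H X i := by
    have h : ∀ y, Relation.ReflTransGen (fun a b => ∃ e ∈ H, a ∈ e ∧ b ∈ e) x₀ y →
        ∃ i, y ∈ Lev H X i := by
      intro y hy
      induction hy with
      | refl => exact ⟨0, SimpleGraph.Reachable.refl _⟩
      | tail _ h ih =>
        obtain ⟨i, hi⟩ := ih
        obtain ⟨e, he, ha, hb⟩ := h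
        exact ⟨i + 1, Or.inr ⟨e, he, hb, _, ha, hi⟩⟩
    obtain ⟨i, hi⟩ := h y₀ (hconn x₀ y₀)
    exact ⟨i, y₀, SimpleGraph.Reachable.refl _, hi⟩
  classical
  obtain ⟨z, hzY, hz⟩ := Nat.find_spec hex
  have hmin : ∀ j < Nat.find hex, ∀ w ∈ Y, w ∉ Lev H X j := fun j hj w hw hwj =>
    Nat.find_min hex hj ⟨w, hw, hwj⟩
  generalize Nat.find hex = i at hz hmin
  cases i with
  | zero => exact hXY z hz hzY
  | succ i =>
  have hzi := hmin i (by omega) z hzY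
  obtain ⟨e, he, hze, hu⟩ := hz.resolve_left hzi
  obtain ⟨l, es, h1, h2, h3, h4, h5, h6, h7, h8, h9⟩ :=
    lead_out ht hφ hinj hXa hXd i e he hu ⟨z, hze, hzi⟩
  obtain ⟨l', es', k1, k2, k3, k4, k5, k6, k7, k8⟩ := greedy ht hφ hinj hYa hYd hze hzY
  cases l' with
  | nil => simp at k6
  | cons w l' =>
  have hll : ∀ x ∈ l, x ∉ w :: l' := fun x hx hx' => hmin i (by omega) x (k7 x hx') (h8 x hx)
  have hee : ∀ f ∈ es, f ∉ es' := by
    intro f hf hf'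
    obtain ⟨c, hc, d, hd, hcd, rfl⟩ := k8 f hf'
    rcases h9 _ hf with ⟨j, hj, x, hxe, hxj⟩ | ⟨c', hc', d', hd', hcd', heq⟩
    · exact hmin (j + 1) (by omega) c hc
        (Or.inr ⟨_, (hφ _ _ hcd).1, (hφ _ _ hcd).2.1, x, hxe, hxj⟩)
    · have hs := hinj _ _ _ _ hcd hcd' heq
      have hcs : c ∈ ({c', d'} : Finset V) := hs ▸ by simp
      rw [Finset.mem_insert, Finset.mem_singleton] at hcs
      rcases hcs with rfl | rfl
      · exact hXY _ hc' hc
      · exact hXY _ hd' hc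
  refine hP ⟨_, _, h1.reverse.append k1 (by simpa [List.getLast?_reverse] using h2)
    (k2 w (by simp)), ?_, ?_, ?_, ?_⟩
  · rw [List.nodup_append']
    exact ⟨List.nodup_reverse.2 h3, k3, fun x hx => hll x (List.mem_reverse.1 hx)⟩
  · rw [List.nodup_append']
    refine ⟨List.nodup_reverse.2 h4, List.nodup_cons.2 ⟨k5, k4⟩, fun f hf hf' => ?_⟩
    rw [List.mem_reverse] at hf
    rcases List.mem_cons.1 hf' with rfl | hf'
    · exact h5 hf
    · exact hee f hf hf'
  · intro f hf
    rw [List.mem_append, List.mem_reverse, List.mem_cons] at hf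
    rcases hf with hf | rfl | hf
    · exact h6 f hf
    · exact he
    · obtain ⟨c, -, d, -, hcd, rfl⟩ := k8 f hf
      exact (hφ _ _ hcd).1
  · rw [List.length_append, List.length_reverse]
    omega

end Components

/-! ### Binomial inequalities -/

lemma le_choose {n : ℕ} : ∀ {k : ℕ}, 1 ≤ k → k + 1 ≤ n → n ≤ n.choose k := by
  induction n with
  | zero => intro k _ h; omega
  | succ n ih =>
    intro k hk hkn
    obtain ⟨j, rfl⟩ : ∃ j, k = j + 1 := ⟨k - 1, by omega⟩
    rw [Nat.choose_succ_succ]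
    rcases Nat.lt_or_ge (j + 1) n with h | h
    · have h1 := ih hk h
      have h2 := Nat.choose_pos (show j ≤ n by omega)
      have h3 : j.succ = j + 1 := rfl
      rw [h3]
      omega
    · obtain rfl : n = j + 1 := by omega
      rw [Nat.choose_succ_self_right, Nat.choose_self]

lemma choose_two_le_choose {n : ℕ} : ∀ {k : ℕ}, 2 ≤ k → k + 2 ≤ n → n.choose 2 ≤ n.choose k := by
  induction n with
  | zero => intro k _ h; omega
  | succ n ih =>
    intro k hk hkn
    rcases Nat.lt_or_ge (k + 1) n with h | h
    · obtain ⟨j, rfl⟩ : ∃ j, k = j + 1 := ⟨k - 1, by omega⟩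
      rw [Nat.choose_succ_succ n j, Nat.choose_succ_succ n 1, Nat.choose_one_right]
      have h1 := ih hk (by omega)
      have h2 := le_choose (n := n) (k := j) (by omega) (by omega)
      have h3 : (1 : ℕ).succ = 2 := rfl
      have h4 : j.succ = j + 1 := rfl
      rw [h3, h4]
      omega
    · rw [← Nat.choose_symm (show k ≤ n + 1 by omega), show n + 1 - k = 2 by omega]

lemma choose_add_lt {t r b q : ℕ} (hr : 3 ≤ r) (hrt : r ≤ t) (hbq : b + q + 1 ≤ t) :
    b.choose (r - 1) + q < t.choose (r - 1) := by
  obtain ⟨s, rfl⟩ : ∃ s, r = s + 3 := ⟨r - 3, by omega⟩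
  obtain ⟨m, rfl⟩ : ∃ m, t = m + 2 := ⟨t - 2, by omega⟩
  rw [show s + 3 - 1 = s + 1 + 1 by omega]
  rw [show (m + 2).choose (s + 1 + 1) = (m + 1).choose (s + 1) + (m + 1).choose (s + 1 + 1) from
    Nat.choose_succ_succ _ _]
  have h1 := le_choose (n := m + 1) (k := s + 1) (by omega) (by omega)
  rcases Nat.lt_or_ge m b with h | h
  · obtain rfl : b = m + 1 := by omega
    omega
  · have h2 : b.choose (s + 1 + 1) ≤ m.choose (s + 1 + 1) := Nat.choose_le_choose _ h
    have h3 : (m + 1).choose (s + 1 + 1) = m.choose (s + 1) + m.choose (s + 1 + 1) :=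
      Nat.choose_succ_succ _ _
    have h4 := Nat.choose_pos (show s + 1 ≤ m by omega)
    omega

lemma clique_count_lt {t r : ℕ} (ht : 9 ≤ t) (hr : 3 ≤ r) (hrt : r + 1 ≤ t) :
    2 * ((t + 1).choose r + (t + 1).choose 2) < (2 * t.choose (r - 1) - 1) * t := by
  have h1 : (t + 1) * t.choose (r - 1) = (t + 1).choose r * r := by
    have := Nat.add_one_mul_choose_eq t (r - 1)
    rwa [show r - 1 + 1 = r by omega] at this
  have h2 : (t + 1).choose 2 * 2 = (t + 1) * t := by
    have := Nat.add_one_mul_choose_eq t 1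
    rw [Nat.choose_one_right] at this
    exact this.symm
  have h3 : t.choose 2 * 2 = t * (t - 1) := by
    have := Nat.add_one_mul_choose_eq (t - 1) 1
    rw [Nat.choose_one_right, show t - 1 + 1 = t by omega] at this
    exact this.symm
  have h4 : t.choose 2 ≤ t.choose (r - 1) := choose_two_le_choose (by omega) (by omega)
  generalize t.choose (r - 1) = C at *
  have h5 : (t + 1).choose r * 3 ≤ (t + 1) * C := by
    rw [h1]; exact Nat.mul_le_mul_left _ hr
  generalize (t + 1).choose r = P at *
  generalize (t + 1).choose 2 = Q at *
  generalize t.choose 2 = R at *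
  obtain ⟨s, rfl⟩ : ∃ s, t = s + 9 := ⟨t - 9, by omega⟩
  rw [show s + 9 - 1 = s + 8 by omega] at h3
  have h6 : (s + 9) * (s + 8) ≤ 2 * C := by omega
  obtain ⟨D, hD⟩ : ∃ D, 2 * C = D + 1 := ⟨2 * C - 1, by
    have : 0 < 2 * C := lt_of_lt_of_le (by positivity) h6
    omega⟩
  rw [hD, Nat.add_sub_cancel]
  nlinarith [mul_le_mul_right h6 (2 * s + 17)]

/-! ### The upper bound -/

/-- A set `W` maximizing `2 * #{h | T h ⊆ W} - K * #W`: every `S ⊆ W` is met by many of the sets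
`T h ⊆ W`. -/
lemma exists_dense {V : Type*} [Fintype V] [DecidableEq V] (H : Finset (Finset V))
    (T : Finset V → Finset V) (K : ℕ) : ∃ W : Finset V,
      (∀ S ⊆ W, K * S.card ≤ 2 * (H.filter (fun h => T h ⊆ W ∧ ¬ Disjoint (T h) S)).card) ∧
      2 * H.card + K * W.card ≤
        2 * (H.filter (fun h => T h ⊆ W)).card + K * Fintype.card V := by
  obtain ⟨W, -, hW⟩ := Finset.exists_max_image (univ : Finset (Finset V))
    (fun W => (2 * (H.filter (fun h => T h ⊆ W)).card - K * W.card : ℤ)) ⟨∅, by simp⟩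
  refine ⟨W, fun S hS => ?_, ?_⟩
  · have h1 := hW (W \ S) (Finset.mem_univ _)
    have h2 : (H.filter (fun h => T h ⊆ W)).card ≤ (H.filter (fun h => T h ⊆ W \ S)).card +
        (H.filter (fun h => T h ⊆ W ∧ ¬ Disjoint (T h) S)).card := by
      refine (Finset.card_le_card fun h hh => ?_).trans (Finset.card_union_le _ _)
      rw [Finset.mem_filter] at hh
      rw [Finset.mem_union, Finset.mem_filter, Finset.mem_filter]
      by_cases hd : Disjoint (T h) S
      · exact Or.inl ⟨hh.1, Finset.subset_sdiff.2 ⟨hh.2, hd⟩⟩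
      · exact Or.inr ⟨hh.1, hh.2, hd⟩
    have h3 := Finset.card_sdiff_add_card_eq_card hS
    rw [← h3] at h1
    push_cast at h1
    zify at h2 ⊢
    linarith
  · have h1 := hW univ (Finset.mem_univ _)
    simp only [Finset.subset_univ, Finset.filter_true, Finset.card_univ] at h1
    zify
    linarith

/-- The upper bound for hypergraphs without a Berge path on `2t + 2` vertices.  In a counterexample
the graph `G` of represented pairs inside a dense set `W` has minimum degree at least `t` and is
connected, so it is either too close to a clique on `t + 1` vertices, or it contains the core that
`card_le_of_core` needs. -/
lemma card_le_of_not_hasBP {V : Type*} [Fintype V] [DecidableEq V] {H : Finset (Finset V)}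
    {t r : ℕ} (ht : 9 ≤ t) (hr : 3 ≤ r) (hrt : r + 1 ≤ t) (hunif : ∀ e ∈ H, e.card = r)
    (hconn : HyperConnected H) (hP : ¬ HasBP H (2 * t + 2))
    (hn : 2 * t.choose (r - 1) * t + 2 * 2 ^ (2 * t + 2 ^ (2 * t) * (t + 4) + 1)
      ≤ Fintype.card V) :
    H.card ≤ t.choose (r - 1) * (Fintype.card V - t) + t.choose r := by
  by_contra hbig
  push Not at hbig
  obtain ⟨E, Bl, φ, T, hBE, hE, hφE, hT, hTi⟩ :=
    hall_split H (fun h hh => by rw [hunif h hh]; omega)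
  have hC1 : t.choose 2 ≤ t.choose (r - 1) := choose_two_le_choose (by omega) (by omega)
  have hC : 1 ≤ t.choose (r - 1) := Nat.choose_pos (by omega)
  obtain ⟨W, hWS, hWbig⟩ := exists_dense H T (2 * t.choose (r - 1) - 1)
  -- distinct `h` have distinct `T h`, so a small `W` contains too few of them
  have hWcard : 2 * t + 2 ^ (2 * t) * (t + 4) < W.card := by
    by_contra hcon
    push Not at hcon
    have h1 : (H.filter (fun h => T h ⊆ W)).card ≤ 2 ^ W.card := by
      rw [← Finset.card_powerset]
      refine Finset.card_le_card_of_injOn T (fun h hh => ?_) (hTi.mono (Finset.coe_subset.2 (Finset.filter_subset _ _)))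
      simp only [Finset.coe_filter, Set.mem_ofPred_eq] at hh
      simpa using hh.2
    have h2 : 2 ^ W.card ≤ 2 ^ (2 * t + 2 ^ (2 * t) * (t + 4)) :=
      Nat.pow_le_pow_right (by norm_num) hcon
    rw [pow_succ] at hn
    generalize 2 ^ (2 * t + 2 ^ (2 * t) * (t + 4)) = M at *
    have hM : 1 ≤ M := le_trans Nat.one_le_two_pow h2
    generalize t.choose (r - 1) = C at *
    generalize Fintype.card V = n at *
    have htn : t ≤ n := by nlinarith
    obtain ⟨m, rfl⟩ := Nat.exists_eq_add_of_le htn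
    rw [Nat.add_sub_cancel_left] at hbig
    obtain ⟨D, hD⟩ : ∃ D, 2 * C = D + 1 := ⟨2 * C - 1, by omega⟩
    rw [hD, Nat.add_sub_cancel] at hWbig
    rw [hD] at hn
    have h3 : 2 * (C * m) = (D + 1) * m := by rw [← hD]; ring
    nlinarith
  -- each set `T h` is either a pair in `E \ Bl` or an `r`-set all of whose pairs are in `Bl`
  have hTE : ∀ h ∈ H, ∀ u ∈ T h, ∀ y ∈ T h, u ≠ y → ({u, y} : Finset V) ∈ E := by
    intro h hh u hu y hy huy
    have hp : ({u, y} : Finset V) ⊆ T h := by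
      intro x hx
      rw [Finset.mem_insert, Finset.mem_singleton] at hx
      rcases hx with rfl | rfl <;> assumption
    rcases (hT h hh).2 with ⟨h1, -⟩ | ⟨h1, h2⟩
    · rwa [Finset.eq_of_subset_of_card_le hp (by rw [(hE _ h1).1, Finset.card_pair huy])]
    · exact hBE (h2 (Finset.mem_powersetCard.2 ⟨h1 ▸ hp, Finset.card_pair huy⟩))
  let G : SimpleGraph V :=
    { Adj := fun u v => u ≠ v ∧ ({u, v} : Finset V) ∈ E ∧ u ∈ W ∧ v ∈ W
      symm := ⟨fun u v h => ⟨h.1.symm, by rw [Finset.pair_comm]; exact h.2.1, h.2.2.2, h.2.2.1⟩⟩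
      loopless := ⟨fun u h => h.1 rfl⟩ }
  have hφ : ∀ u v, G.Adj u v → φ {u, v} ∈ H ∧ u ∈ φ {u, v} ∧ v ∈ φ {u, v} := by
    intro u v huv
    obtain ⟨-, h1, h2⟩ := hE _ huv.2.1
    exact ⟨h1, h2 (by simp), h2 (by simp)⟩
  have hinj : ∀ u v x y, G.Adj u v → G.Adj x y → φ {u, v} = φ {x, y} →
      ({u, v} : Finset V) = {x, y} := fun u v x y h1 h2 h => hφE h1.2.1 h2.2.1 h
  have hW : ∀ x y, G.Adj x y → x ∈ W ∧ y ∈ W := fun x y h => h.2.2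
  have hdeg : ∀ x ∈ W, ∀ S : Finset V, (∀ y, G.Adj x y → y ∈ S) → t ≤ S.card := by
    intro x hx S hS
    by_contra hcon
    push Not at hcon
    have h1 := hWS {x} (by simpa using hx)
    -- at `x`, the encoded `r`-sets live on blue neighbours, the encoded pairs on the other ones
    have h2 : (H.filter (fun h => T h ⊆ W ∧ ¬ Disjoint (T h) {x})).card ≤
        ((S.filter (fun y => {x, y} ∈ Bl)).card).choose (r - 1) +
          (S.filter (fun y => {x, y} ∉ Bl)).card := by
      calc _ ≤ (((S.filter (fun y => {x, y} ∈ Bl)).powersetCard (r - 1)).image (insert x) ∪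
              (S.filter (fun y => {x, y} ∉ Bl)).image (fun y => ({x, y} : Finset V))).card := by
            refine Finset.card_le_card_of_injOn T (fun h hh => ?_) (hTi.mono (Finset.coe_subset.2 (Finset.filter_subset _ _)))
            simp only [Finset.coe_filter, Set.mem_ofPred_eq, Finset.disjoint_singleton_right,
              not_not] at hh
            obtain ⟨hhH, hhW, hxh⟩ := hh
            have hadj : ∀ y ∈ T h, x ≠ y → y ∈ S := fun y hy hxy =>
              hS y ⟨hxy, hTE h hhH x hxh y hy hxy, hx, hhW hy⟩
            rw [Finset.mem_coe, Finset.mem_union, Finset.mem_image, Finset.mem_image]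
            rcases (hT h hhH).2 with ⟨k1, k2⟩ | ⟨k1, k2⟩
            · right
              obtain ⟨a, b, hab, hTab⟩ := Finset.card_eq_two.1 (hE _ k1).1
              rw [hTab, Finset.mem_insert, Finset.mem_singleton] at hxh
              rcases hxh with rfl | rfl
              · exact ⟨b, Finset.mem_filter.2 ⟨hadj b (by simp [hTab]) hab, hTab ▸ k2⟩, hTab.symm⟩
              · rw [Finset.pair_comm] at hTab
                exact ⟨a, Finset.mem_filter.2 ⟨hadj a (by simp [hTab]) hab.symm, hTab ▸ k2⟩,
                  hTab.symm⟩
            · left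
              refine ⟨(T h).erase x, Finset.mem_powersetCard.2 ⟨fun y hy => ?_, ?_⟩,
                Finset.insert_erase hxh⟩
              · obtain ⟨hyx, hy⟩ := Finset.mem_erase.1 hy
                refine Finset.mem_filter.2 ⟨hadj y hy hyx.symm, k2 (Finset.mem_powersetCard.2
                  ⟨?_, Finset.card_pair hyx.symm⟩)⟩
                intro w hw
                rw [k1] at hxh hy
                rw [Finset.mem_insert, Finset.mem_singleton] at hw
                rcases hw with rfl | rfl <;> assumption
              · rw [Finset.card_erase_of_mem hxh, k1, hunif h hhH]
        _ ≤ _ := by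
            refine (Finset.card_union_le _ _).trans (Nat.add_le_add ?_ Finset.card_image_le)
            exact Finset.card_image_le.trans (Finset.card_powersetCard _ _).le
    have h3 : (S.filter (fun y => {x, y} ∈ Bl)).card + (S.filter (fun y => {x, y} ∉ Bl)).card
        = S.card := Finset.card_filter_add_card_filter_not _
    have h4 := choose_add_lt hr (show r ≤ t by omega)
      (show (S.filter (fun y => {x, y} ∈ Bl)).card + (S.filter (fun y => {x, y} ∉ Bl)).card + 1 ≤ t
        by omega)
    rw [Finset.card_singleton] at h1
    omega
  have hcon := reachable_of_no_path (by omega) hconn hP hφ hinj hW hdeg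
  have hPG : ¬ ∃ u, GP G W u (2 * t + 1) := fun ⟨u, hu⟩ => hP (hu.hasBP hφ hinj)
  have hW1 : 2 * t + 1 < W.card := by
    have h1 : 1 * 1 ≤ 2 ^ (2 * t) * (t + 4) := Nat.mul_le_mul Nat.one_le_two_pow (by omega)
    omega
  rcases cycle_or_clique (by omega) hcon hW hdeg hPG hW1 with
    ⟨c, hc, hcc⟩ | ⟨Z, hZW, z, hz, hZc, hZ⟩
  · obtain ⟨A, B, hAB, hA, hB, hadj⟩ := core_of_cycle (by omega) hcon hW hdeg hPG hWcard hc hcc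
    refine absurd (card_le_of_core (by omega) (by omega) hunif hconn hP hAB hA hB
      (fun a b => φ {a, b}) (fun a ha b hb => (hφ a b (hadj a ha b hb)).1)
      (fun a ha b hb => (hφ a b (hadj a ha b hb)).2) ?_) (by omega)
    intro a ha b hb a' ha' b' hb' h
    have h1 := hinj _ _ _ _ (hadj a ha b hb) (hadj a' ha' b' hb') h
    have h2 : a ∈ ({a', b'} : Finset V) := h1 ▸ by simp
    have h3 : b ∈ ({a', b'} : Finset V) := h1 ▸ by simp
    rw [Finset.mem_insert, Finset.mem_singleton] at h2 h3
    exact ⟨h2.resolve_right fun h => Finset.disjoint_left.1 hAB ha (h ▸ hb'),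
      h3.resolve_left fun h => Finset.disjoint_left.1 hAB ha' (h ▸ hb)⟩
  · -- every set `T h ⊆ W` meeting `Z.erase z` is a clique of `G`, hence lies in `Z`
    have h1 := hWS (Z.erase z) ((Finset.erase_subset _ _).trans hZW)
    rw [Finset.card_erase_of_mem hz, hZc, Nat.add_sub_cancel] at h1
    have h2 : (H.filter (fun h => T h ⊆ W ∧ ¬ Disjoint (T h) (Z.erase z))).card ≤
        (t + 1).choose r + (t + 1).choose 2 := by
      calc _ ≤ (Z.powersetCard r ∪ Z.powersetCard 2).card := by
            refine Finset.card_le_card_of_injOn T (fun h hh => ?_) (hTi.mono (Finset.coe_subset.2 (Finset.filter_subset _ _)))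
            simp only [Finset.coe_filter, Set.mem_ofPred_eq, Finset.not_disjoint_iff] at hh
            obtain ⟨hhH, hhW, u, huh, huZ⟩ := hh
            obtain ⟨huz, huZ⟩ := Finset.mem_erase.1 huZ
            have hsub : T h ⊆ Z := by
              intro y hy
              by_cases huy : u = y
              · exact huy ▸ huZ
              · exact hZ u huZ huz y ⟨huy, hTE h hhH u huh y hy huy, hhW huh, hhW hy⟩
            rw [Finset.mem_coe, Finset.mem_union, Finset.mem_powersetCard,
              Finset.mem_powersetCard]
            rcases (hT h hhH).2 with ⟨k1, -⟩ | ⟨k1, -⟩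
            · exact Or.inr ⟨hsub, (hE _ k1).1⟩
            · exact Or.inl ⟨hsub, by rw [k1, hunif h hhH]⟩
        _ ≤ _ := by
            refine (Finset.card_union_le _ _).trans ?_
            rw [Finset.card_powersetCard, Finset.card_powersetCard, hZc]
    have h3 := clique_count_lt ht hr hrt
    omega

/-! ### The connected Turán number -/

theorem exCon_berge_linear_forest (k r : ℕ) (hk : 2 ≤ k) (ℓ : Fin k → ℕ)
    (hodd : ∀ i, Odd (ℓ i)) (hpos : ∀ i, 1 ≤ ℓ i)
    (hmono : ∀ i j : Fin k, i ≤ j → ℓ j ≤ ℓ i)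
    (hr3 : 3 ≤ r) (hrL : r ≤ (∑ i, (ℓ i + 1)) / 2 - 7) :
    ∃ N, ∀ n ≥ N,
      exConBerge r n (pathsG k ℓ) =
        ((∑ i, (ℓ i + 1)) / 2 - 1).choose (r - 1) * (n - (∑ i, (ℓ i + 1)) / 2 + 1)
          + ((∑ i, (ℓ i + 1)) / 2 - 1).choose r := by
  have hL2 : 2 ∣ ∑ i, (ℓ i + 1) := Finset.dvd_sum fun i _ => (hodd i).add_one.two_dvd
  obtain ⟨t, hL⟩ : ∃ t, ∑ i, (ℓ i + 1) = 2 * t + 2 := ⟨(∑ i, (ℓ i + 1)) / 2 - 1, by omega⟩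
  have hhalf : (∑ i, (ℓ i + 1)) / 2 = t + 1 := by omega
  rw [hhalf] at hrL ⊢
  rw [Nat.add_sub_cancel]
  refine ⟨2 * t.choose (r - 1) * t + 2 * 2 ^ (2 * t + 2 ^ (2 * t) * (t + 4) + 1) + (t + 1),
    fun n hn => ?_⟩
  rw [show n - (t + 1) + 1 = n - t by omega]
  have hupper : ∀ H : Finset (Finset (Fin n)), (∀ e ∈ H, e.card = r) → HyperConnected H →
      ¬ IsBergeCopy (pathsG k ℓ) H → H.card ≤ t.choose (r - 1) * (n - t) + t.choose r := by
    intro H hunif hconn hfree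
    have h := card_le_of_not_hasBP (t := t) (by omega) hr3 (by omega) hunif hconn
      (fun hP => hfree (HasBP.isBergeCopy (hL ▸ hP))) (by rw [Fintype.card_fin]; omega)
    rwa [Fintype.card_fin] at h
  obtain ⟨A, -, hA⟩ := Finset.exists_subset_card_eq
    (show t ≤ (univ : Finset (Fin n)).card by rw [Finset.card_univ, Fintype.card_fin]; omega)
  refine IsGreatest.csSup_eq ⟨⟨coneH A r, ?_, ?_, ?_, ?_⟩, ?_⟩
  · intro e he
    exact (Finset.mem_powersetCard.1 (Finset.mem_filter.1 he).1).2
  · exact coneH_connected A r (by omega) (by omega)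
  · exact coneH_free A r hodd (by omega)
  · refine le_antisymm (hupper _ (fun e he => ?_) (coneH_connected A r (by omega) (by omega))
      (coneH_free A r hodd (by omega))) ?_
    · exact (Finset.mem_powersetCard.1 (Finset.mem_filter.1 he).1).2
    · have h := coneH_card A r (by omega)
      rwa [hA, Fintype.card_fin] at h
  · rintro m ⟨H, h1, h2, h3, rfl⟩
    exact hupper H h1 h2 h3
end
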